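/- Fix φ, ψ, u ∈ C(X) with u satisfying property (P), and fix α ∈ ℝ. Suppose q(α) ∈ ℝ realises the infimum defining S(α), so S(α) = T_α(q(α)), and suppose that (1) the potential q(α)(φ − αψ) − S(α)u has an ergodic equilibrium state ν_α with ∫ ψ dν_α > 0 and ∫ u dν_α > 0, and (2) the function R_α(q,t) is differentiable at (q(α), S(α)). Then ν_α(K̂_α) = 1 and dim_u ν_α = S(α); in particular F̂(α) = S(α). -/

import Mathlib

/-!
Write `ξ = q₀ (φ - αψ) - s u`, `A = ∫ (φ - αψ) dν` and `B = ∫ u dν > 0`.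

*Identification of the exponents.* The inequality `h_ν(f) + ∫ η dν ≤ P(η)` (`le_pressure`) says
that `R(q, t)` lies above the affine function `h_ν(f) + q A - t B`, with equality at `(q₀, s)`
because `ν` is an equilibrium state. Differentiability makes this affine function the tangent plane
of `R` there. By definition of `S(α)`, `R ≥ 0` on `{t < s}`, while `R(q₀, s) ≤ 0`; a tangent plane
with `A ≠ 0` would produce negative values of `R` at points with `t < s` (`slope_eq_zero`). So
`A = 0`, `R(q₀, s) = 0` and `h_ν(f) = s B`. The ergodic theorem for `φ`, `ψ`, `u` then gives
`ν(K̂_α) = 1`.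

*Upper bound* (`dimu_le`). The covers by Bowen balls that witness `P(ξ) ≤ 0` are recentred at
points of `K̂_α`. On countably many pieces of this set, `S_n (φ - αψ)` is at most a small multiple
of `n` and `S_n u` grows at a definite linear rate, so `-t S_n u` is eventually below
`S_n ξ - n c` for some `c > 0` whenever `t > s`; the covers therefore have small `u`-weight.

*Lower bounds* (`le_pressure`, `le_dimu`). Both follow from `coverSum_lower_bound`, an entropy
distribution principle: if `h_ν(f, P) + ∫ w dν > 0` then covers with weights `exp (S_n w)` of a set
of full measure have sums bounded below. It rests on an upper estimate
`ν(B(x, n, δ) ∩ G) ≤ exp (-n c)` for each `c < h_ν(f, P)`, where `G` is a set of good points.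
By the Shannon–McMillan–Breiman inequality (`ae_eventually_cyl_le`), the `P`-cylinder of length `n`
around a typical point has measure at most `exp (-n c)`. By Lusin's theorem, the letters read along
the orbit of a good point of `B(x, n, δ)` agree with one fixed word except at a small proportion of
times, so the number of cylinders that meet the good part of the ball has arbitrarily small exponential
growth rate (`sum_hamming_le` is the generating function for this count). The ergodic theorem comes
from a maximal ergodic argument, and the inequality for cylinder measures from Breiman's argument,
with Lévy's upward theorem for the conditional probabilities of the letters.
-/

open MeasureTheory Filter Set Topology
open scoped ENNReal

noncomputable section

namespace Multifractal

variable {X : Type*} [MetricSpace X]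

/-- The Birkhoff sum `S_n φ(x) = ∑_{k<n} φ(f^k x)`. -/
def birk (f : X → X) (φ : X → ℝ) (n : ℕ) (x : X) : ℝ :=
  ∑ k ∈ Finset.range n, φ (f^[k] x)

/-- The Bowen ball `B(x,n,δ)`. -/
def bowenBall (f : X → X) (x : X) (n : ℕ) (δ : ℝ) : Set X :=
  {y | ∀ k < n, dist (f^[k] x) (f^[k] y) < δ}

/-- A countable cover of `Z` by Bowen balls of order at least `N` and radius `δ`,
with centres in `Z`; this is the collection `P(Z,N,δ)`. -/
def IsBowenCover (f : X → X) (Z : Set X) (N : ℕ) (δ : ℝ) (E : Set (X × ℕ)) : Prop :=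
  E.Countable ∧ (∀ p ∈ E, p.1 ∈ Z ∧ N ≤ p.2) ∧ Z ⊆ ⋃ p ∈ E, bowenBall f p.1 p.2 δ

/-- The weighted sum `∑_i exp (w (x_i, n_i))` over a cover `E`. -/
def coverSum (E : Set (X × ℕ)) (w : X × ℕ → ℝ) : ℝ≥0∞ :=
  ∑' p : E, ENNReal.ofReal (Real.exp (w ↑p))

/-- The set function `m_P(Z,s,φ,δ) = lim_{N→∞} m_P(Z,s,φ,N,δ)` (the limit in `N` is a
supremum, by monotonicity). -/
def mP (f : X → X) (Z : Set X) (s : ℝ) (φ : X → ℝ) (δ : ℝ) : ℝ≥0∞ :=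
  ⨆ N : ℕ, ⨅ (E : Set (X × ℕ)) (_ : IsBowenCover f Z N δ E),
    coverSum E fun p => -(p.2 : ℝ) * s + birk f φ p.2 p.1

/-- `P_Z(φ,δ) = inf {s | m_P(Z,s,φ,δ) = 0}`, as an extended real. -/
def pressureAt (f : X → X) (Z : Set X) (φ : X → ℝ) (δ : ℝ) : EReal :=
  sInf ((fun s : ℝ => (s : EReal)) '' {s : ℝ | mP f Z s φ δ = 0})

/-- The topological pressure `P_Z(φ) = lim_{δ→0} P_Z(φ,δ)` (the limit is a supremum, by
monotonicity in `δ`). -/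
def pressure (f : X → X) (Z : Set X) (φ : X → ℝ) : EReal :=
  ⨆ (δ : ℝ) (_ : 0 < δ), pressureAt f Z φ δ

/-- Finite topological entropy: `h_top(X) = P_X(0) < ∞`. -/
def FiniteHtop (f : X → X) : Prop := pressure f univ (fun _ => 0) ≠ ⊤

/-- The set function `m_u(Z,s,δ)` used to define the `u`-dimension. -/
def mU (f : X → X) (u : X → ℝ) (Z : Set X) (s : ℝ) (δ : ℝ) : ℝ≥0∞ :=
  ⨆ N : ℕ, ⨅ (E : Set (X × ℕ)) (_ : IsBowenCover f Z N δ E),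
    coverSum E fun p => -s * birk f u p.2 p.1

/-- `dim_u(Z,δ) = inf {s | m_u(Z,s,δ) = 0}`. -/
def dimuAt (f : X → X) (u : X → ℝ) (Z : Set X) (δ : ℝ) : EReal :=
  sInf ((fun s : ℝ => (s : EReal)) '' {s : ℝ | mU f u Z s δ = 0})

/-- The `u`-dimension `dim_u Z = lim_{δ→0} dim_u(Z,δ)`, with `dim_u ∅ = -∞`. -/
def dimu (f : X → X) (u : X → ℝ) (Z : Set X) : EReal :=
  ⨆ (δ : ℝ) (_ : 0 < δ), dimuAt f u Z δ

/-- Property (P): for every `δ>0` there exist covers `E_N ∈ P(X,N,δ)` with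
`lim_{N→∞} inf_{(x,n) ∈ E_N} S_n u(x) = +∞`. -/
def PropP (f : X → X) (u : X → ℝ) : Prop :=
  ∀ δ : ℝ, 0 < δ → ∃ E : ℕ → Set (X × ℕ),
    (∀ N, IsBowenCover f univ N δ (E N)) ∧
    ∀ C : ℝ, ∃ N₀ : ℕ, ∀ N ≥ N₀, ∀ p ∈ E N, C ≤ birk f u p.2 p.1

/-- The ratio level set `K_α = {x | S_nφ(x)/S_nψ(x) → α}`. -/
def Kratio (f : X → X) (φ ψ : X → ℝ) (α : ℝ) : Set X :=
  {x | Tendsto (fun n : ℕ => birk f φ n x / birk f ψ n x) atTop (𝓝 α)}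

/-- The Birkhoff average level set `K_α^φ = {x | (1/n) S_nφ(x) → α}`. -/
def Kbirk (f : X → X) (φ : X → ℝ) (α : ℝ) : Set X :=
  {x | Tendsto (fun n : ℕ => birk f φ n x / n) atTop (𝓝 α)}

/-- The set `X̂` of points with `liminf S_nψ(x) > 0` and `liminf (1/n) S_n u(x) > 0`. -/
def Xhat (f : X → X) (ψ u : X → ℝ) : Set X :=
  {x | 0 < Filter.liminf (fun n : ℕ => ((birk f ψ n x : ℝ) : EReal)) atTop ∧
       0 < Filter.liminf (fun n : ℕ => ((birk f u n x / n : ℝ) : EReal)) atTop}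

/-- The set of points where `liminf (1/n) S_n v(x) > 0`. -/
def liminfPosSet (f : X → X) (v : X → ℝ) : Set X :=
  {x | 0 < Filter.liminf (fun n : ℕ => ((birk f v n x / n : ℝ) : EReal)) atTop}

/-- The potential `q(φ - αψ) - tu`. -/
def potential (φ ψ u : X → ℝ) (α q t : ℝ) : X → ℝ :=
  fun x => q * (φ x - α * ψ x) - t * u x

/-- `T_α(q) = inf {t | P_Z(q(φ-αψ) - tu) ≤ 0}` for the system restricted to `Z`. -/
def TspecOn (f : X → X) (Z : Set X) (φ ψ u : X → ℝ) (α q : ℝ) : EReal :=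
  sInf ((fun t : ℝ => (t : EReal)) '' {t : ℝ | pressure f Z (potential φ ψ u α q t) ≤ 0})

/-- The predicted spectrum `S(α) = inf_q T_α(q)` for the system restricted to `Z`. -/
def SspecOn (f : X → X) (Z : Set X) (φ ψ u : X → ℝ) (α : ℝ) : EReal :=
  ⨅ q : ℝ, TspecOn f Z φ ψ u α q

/-- `T_α(q) = inf {t | P(q(φ-αψ) - tu) ≤ 0}`. -/
def Tspec (f : X → X) (φ ψ u : X → ℝ) (α q : ℝ) : EReal := TspecOn f univ φ ψ u α q

/-- The thermodynamically predicted spectrum `S(α) = inf_q T_α(q)`. -/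
def Sspec (f : X → X) (φ ψ u : X → ℝ) (α : ℝ) : EReal := SspecOn f univ φ ψ u α

/-- `T_0(q) = inf{t | P(qφ - tu) ≤ 0}` (the non-mixed case `u = ψ`). -/
def T0fun (f : X → X) (φ u : X → ℝ) (q : ℝ) : EReal :=
  sInf ((fun t : ℝ => (t : EReal)) ''
    {t : ℝ | pressure f univ (fun x => q * φ x - t * u x) ≤ 0})

/-- `Q = {q | T_0(q) < ∞}`. -/
def Qset (f : X → X) (φ u : X → ℝ) : Set ℝ := {q | T0fun f φ u q < ⊤}

/-- `Ĩ = ⋃_{q ∈ int Q} J(q)`: `α ∈ Ĩ` iff `α` is the slope of a subtangent line to the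
convex function `T_0` at some `q` in the interior of `Q`. -/
def Itilde (f : X → X) (φ u : X → ℝ) : Set ℝ :=
  {α | ∃ q ∈ interior (Qset f φ u), ∀ q' : ℝ,
    T0fun f φ u q + ((α * (q' - q) : ℝ) : EReal) ≤ T0fun f φ u q'}

/-- The approximate level set `G_n(U)`. -/
def Gset (f : X → X) (φ : X → ℝ) (n : ℕ) (U : Set ℝ) : Set X :=
  {x | birk f φ n x / n ∈ U}

/-- `Λ_n^δ(U)`: the minimal cardinality of a set `E` with `B(E,n,δ) ⊇ G_n(U)`. -/
def Lam (f : X → X) (φ : X → ℝ) (n : ℕ) (δ : ℝ) (U : Set ℝ) : ℕ :=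
  sInf {m : ℕ | ∃ E : Finset X, E.card = m ∧ Gset f φ n U ⊆ ⋃ x ∈ E, bowenBall f x n δ}

/-- `(1/n) log m` as an extended real, with value `-∞` when `m = 0`. -/
def elogn (m n : ℕ) : EReal :=
  if m = 0 then (⊥ : EReal) else ((Real.log m / n : ℝ) : EReal)

/-- The lower coarse spectrum. -/
def lFspec (f : X → X) (φ : X → ℝ) (α : ℝ) : EReal :=
  ⨅ (U : Set ℝ) (_ : U ∈ 𝓝 α), ⨆ (δ : ℝ) (_ : 0 < δ),
    Filter.liminf (fun n : ℕ => elogn (Lam f φ n δ U) n) atTop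

/-- The upper coarse spectrum. -/
def uFspec (f : X → X) (φ : X → ℝ) (α : ℝ) : EReal :=
  ⨅ (U : Set ℝ) (_ : U ∈ 𝓝 α), ⨆ (δ : ℝ) (_ : 0 < δ),
    Filter.limsup (fun n : ℕ => elogn (Lam f φ n δ U) n) atTop

/-- Right derivative of a convex function, as the infimum of difference quotients. -/
def Dplus (g : ℝ → ℝ) (q : ℝ) : ℝ :=
  sInf {m : ℝ | ∃ ε : ℝ, 0 < ε ∧ m = (g (q + ε) - g q) / ε}

/-- Left derivative of a convex function, as the supremum of difference quotients. -/
def Dminus (g : ℝ → ℝ) (q : ℝ) : ℝ :=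
  sSup {m : ℝ | ∃ ε : ℝ, 0 < ε ∧ m = (g q - g (q - ε)) / ε}

section Measures

variable [MeasurableSpace X]

/-- The set `M_f(X)` of `f`-invariant Borel probability measures. -/
def invProb (f : X → X) : Set (Measure X) :=
  {μ | IsProbabilityMeasure μ ∧ MeasurePreserving f μ μ}

/-- The set `M_f^e(X)` of ergodic `f`-invariant Borel probability measures. -/
def ergProb (f : X → X) : Set (Measure X) :=
  {μ | IsProbabilityMeasure μ ∧ Ergodic f μ}

/-- A finite measurable partition of `X`. -/
def IsFinPartition {m : ℕ} (P : Fin m → Set X) : Prop :=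
  (∀ i, MeasurableSet (P i)) ∧ (∀ i j, i ≠ j → Disjoint (P i) (P j)) ∧ (⋃ i, P i) = univ

/-- The entropy `H_μ(P) = ∑_i -μ(P_i) log μ(P_i)` of a finite partition. -/
def partEnt (μ : Measure X) {ι : Type*} [Fintype ι] (P : ι → Set X) : ℝ :=
  ∑ i, -((μ (P i)).toReal * Real.log (μ (P i)).toReal)

/-- The dynamical refinement `⋁_{k<n} f^{-k} P` of a partition. -/
def orbitJoin (f : X → X) {m : ℕ} (P : Fin m → Set X) (n : ℕ) :
    (Fin n → Fin m) → Set X :=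
  fun w => ⋂ k : Fin n, f^[(k : ℕ)] ⁻¹' P (w k)

/-- The Kolmogorov–Sinai entropy `h_μ(f)`. -/
def kolSinai (f : X → X) (μ : Measure X) : ℝ :=
  ⨆ (m : ℕ) (P : Fin m → Set X) (_ : IsFinPartition P),
    ⨅ n : ℕ, partEnt μ (orbitJoin f P (n + 1)) / (n + 1)

/-- The `u`-dimension of a measure: `dim_u μ = inf {dim_u Z | μ(Z) = 1}`. -/
def dimuMeas (f : X → X) (u : X → ℝ) (μ : Measure X) : EReal :=
  sInf {d : EReal | ∃ Z : Set X, μ Z = 1 ∧ d = dimu f u Z}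

/-- `μ` is a weak Gibbs measure for `φ` with pressure `Pφ`. -/
def WeakGibbs (f : X → X) (μ : Measure X) (φ : X → ℝ) (Pφ : ℝ) : Prop :=
  ∀ x : X,
    Tendsto (fun δ : ℝ => Filter.liminf (fun n : ℕ =>
        (((-Real.log ((μ (bowenBall f x n δ)).toReal) + birk f φ n x) / n : ℝ) : EReal)) atTop)
      (𝓝[>] (0 : ℝ)) (𝓝 ((Pφ : EReal))) ∧
    Tendsto (fun δ : ℝ => Filter.limsup (fun n : ℕ =>
        (((-Real.log ((μ (bowenBall f x n δ)).toReal) + birk f φ n x) / n : ℝ) : EReal)) atTop)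
      (𝓝[>] (0 : ℝ)) (𝓝 ((Pφ : EReal)))

/-- The level set `K_α^{d_μ}` of points with pointwise dimension `α`. -/
def KdimSet (μ : Measure X) (α : ℝ) : Set X :=
  {x | Tendsto (fun r : ℝ => Real.log ((μ (Metric.ball x r)).toReal) / Real.log r)
      (𝓝[>] (0 : ℝ)) (𝓝 α)}

end Measures



/-! ### Birkhoff averages along an ergodic measure -/

section Birkhoff

variable {Ω : Type*}

lemma birk_zero (f : Ω → Ω) (g : Ω → ℝ) (x : Ω) : birk f g 0 x = 0 := by simp [birk]

lemma birk_succ' (f : Ω → Ω) (g : Ω → ℝ) (n : ℕ) (x : Ω) :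
    birk f g (n + 1) x = g x + birk f g n (f x) := by
  simp [birk, Finset.sum_range_succ', add_comm]

lemma birk_lin (f : Ω → Ω) (g₁ g₂ : Ω → ℝ) (a b : ℝ) (n : ℕ) (x : Ω) :
    birk f (fun y => a * g₁ y + b * g₂ y) n x = a * birk f g₁ n x + b * birk f g₂ n x := by
  simp [birk, Finset.sum_add_distrib, Finset.mul_sum]

lemma birk_const (f : Ω → Ω) (c : ℝ) (n : ℕ) (x : Ω) : birk f (fun _ => c) n x = n * c := by
  simp [birk]

lemma birk_sub_const (f : Ω → Ω) (g : Ω → ℝ) (c : ℝ) (n : ℕ) (x : Ω) :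
    birk f (fun y => g y - c) n x = birk f g n x - n * c := by
  simp [birk, Finset.sum_sub_distrib]

lemma birk_neg (f : Ω → Ω) (g : Ω → ℝ) (n : ℕ) (x : Ω) :
    birk f (fun y => - g y) n x = - birk f g n x := by
  simp [birk]

/-- The running maximum `max_{0 ≤ k ≤ n} S_k g`, in its recursive form. -/
def maxBirk (f : Ω → Ω) (g : Ω → ℝ) : ℕ → Ω → ℝ
  | 0 => fun _ => 0
  | n + 1 => fun x => max 0 (g x + maxBirk f g n (f x))

lemma maxBirk_nonneg (f : Ω → Ω) (g : Ω → ℝ) (n : ℕ) (x : Ω) : 0 ≤ maxBirk f g n x := by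
  cases n <;> simp [maxBirk]

lemma maxBirk_mono (f : Ω → Ω) (g : Ω → ℝ) (x : Ω) : Monotone fun n => maxBirk f g n x := by
  refine monotone_nat_of_le_succ fun n => ?_
  induction n generalizing x with
  | zero => simp [maxBirk]
  | succ n ih =>
    have := ih (f x)
    simp only [maxBirk] at this ⊢
    gcongr

lemma birk_le_maxBirk (f : Ω → Ω) (g : Ω → ℝ) (n : ℕ) (x : Ω) :
    birk f g n x ≤ maxBirk f g n x := by
  induction n generalizing x with
  | zero => simp [maxBirk, birk]
  | succ n ih =>
    rw [birk_succ', maxBirk]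
    exact le_max_of_le_right (by gcongr; exact ih _)

variable [MeasurableSpace Ω]

lemma measurable_maxBirk {f : Ω → Ω} (hf : Measurable f) {g : Ω → ℝ} (hg : Measurable g) (n : ℕ) :
    Measurable (maxBirk f g n) := by
  induction n with
  | zero => exact measurable_const
  | succ n ih => exact measurable_const.max (hg.add (ih.comp hf))

lemma integrable_maxBirk {f : Ω → Ω} {ν : Measure Ω} [IsProbabilityMeasure ν]
    (hf : MeasurePreserving f ν ν) {g : Ω → ℝ}
    (hg : Integrable g ν) (n : ℕ) : Integrable (maxBirk f g n) ν := by
  induction n with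
  | zero => exact integrable_const _
  | succ n ih =>
    exact (integrable_const (0 : ℝ)).sup (hg.add (hf.integrable_comp_of_integrable ih))

/-- Maximal ergodic argument: if `∫ g < 0`, the sums `S_n g` are a.e. bounded above. Where they are
unbounded, an invariant set, the increments `M_{n+1} - M_n ∘ f` of the running maximum tend to `g`
and have nonnegative integral. -/
lemma ae_bddAbove_birk {f : Ω → Ω} {ν : Measure Ω} [IsProbabilityMeasure ν] (h : Ergodic f ν)
    {g : Ω → ℝ} (hgm : Measurable g) (hg : Integrable g ν) (hneg : ∫ x, g x ∂ν < 0) :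
    ∀ᵐ x ∂ν, ∃ C : ℝ, ∀ n, birk f g n x ≤ C := by
  have hfm : Measurable f := h.toMeasurePreserving.measurable
  set B : Set Ω := {x | BddAbove (range fun n => maxBirk f g n x)} with hB
  have hBm : MeasurableSet B :=
    measurableSet_bddAbove_range fun n => measurable_maxBirk hfm hgm n
  have hinv : f ⁻¹' B = B := by
    ext x
    simp only [hB, mem_preimage, mem_ofPred_eq]
    constructor
    · rintro ⟨C, hC⟩
      refine ⟨|g x| + C, ?_⟩
      rintro _ ⟨n, rfl⟩
      have h1 : ∀ n, maxBirk f g n (f x) ≤ C := fun n => hC ⟨n, rfl⟩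
      have h0 := (maxBirk_nonneg f g 0 (f x)).trans (h1 0)
      cases n with
      | zero => simp only [maxBirk]; positivity
      | succ n =>
        simp only [maxBirk]
        exact max_le (by positivity) (add_le_add (le_abs_self _) (h1 n))
    · rintro ⟨C, hC⟩
      refine ⟨C - g x, ?_⟩
      rintro _ ⟨n, rfl⟩
      have h1 : maxBirk f g (n + 1) x ≤ C := hC ⟨n + 1, rfl⟩
      simp only [maxBirk] at h1
      have := (le_max_right _ _).trans h1
      simp only
      linarith
  rcases h.toPreErgodic.ae_mem_or_ae_notMem hBm hinv with hae | hae
  · filter_upwards [hae] with x hx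
    obtain ⟨C, hC⟩ := hx
    exact ⟨C, fun n => (birk_le_maxBirk f g n x).trans (hC ⟨n, rfl⟩)⟩
  · exfalso
    have hlim : Tendsto (fun n => ∫ x, (maxBirk f g (n + 1) x - maxBirk f g n (f x)) ∂ν) atTop
        (𝓝 (∫ x, g x ∂ν)) := by
      refine tendsto_integral_of_dominated_convergence (fun x => |g x|)
        (fun n => ((measurable_maxBirk hfm hgm (n + 1)).sub
          ((measurable_maxBirk hfm hgm n).comp hfm)).aestronglyMeasurable) hg.abs ?_ ?_
      · refine fun n => ae_of_all _ fun x => ?_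
        have h0 := maxBirk_nonneg f g n (f x)
        rw [Real.norm_eq_abs, abs_le]
        simp only [maxBirk]
        constructor
        · have := le_max_right 0 (g x + maxBirk f g n (f x))
          have := neg_abs_le (g x)
          linarith
        · rw [sub_le_iff_le_add]
          exact max_le (by positivity) (by gcongr; exact le_abs_self _)
      · filter_upwards [hae] with x hx
        have hx' : f x ∉ B := by rwa [← mem_preimage, hinv]
        have htop := tendsto_atTop_atTop_of_monotone' (maxBirk_mono f g (f x)) hx'
        refine tendsto_const_nhds.congr' ?_
        filter_upwards [htop.eventually_ge_atTop (- g x)] with n hn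
        simp only [maxBirk]
        rw [max_eq_right (by linarith)]
        ring
    have hge : 0 ≤ ∫ x, g x ∂ν := by
      refine ge_of_tendsto' hlim fun n => ?_
      have hM := integrable_maxBirk h.toMeasurePreserving hg
      have hMf : Integrable (fun x => maxBirk f g n (f x)) ν :=
        h.toMeasurePreserving.integrable_comp_of_integrable (hM n)
      rw [integral_sub (hM _) hMf]
      have : ∫ x, maxBirk f g n (f x) ∂ν = ∫ x, maxBirk f g n x ∂ν := by
        conv_rhs => rw [← h.toMeasurePreserving.map_eq]
        rw [integral_map hfm.aemeasurable (measurable_maxBirk hfm hgm n).aestronglyMeasurable]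
      rw [this, sub_nonneg]
      exact integral_mono (hM _) (hM _) fun x => maxBirk_mono f g x (Nat.le_succ n)
    linarith

lemma ae_eventually_birk_le {f : Ω → Ω} {ν : Measure Ω} [IsProbabilityMeasure ν] (h : Ergodic f ν)
    {g : Ω → ℝ} (hgm : Measurable g) (hg : Integrable g ν) {c : ℝ} (hc : ∫ x, g x ∂ν < c) :
    ∀ᵐ x ∂ν, ∀ᶠ n : ℕ in atTop, birk f g n x ≤ n * c := by
  obtain ⟨c', h1, h2⟩ := exists_between hc
  have hneg : ∫ x, (g x - c') ∂ν < 0 := by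
    rw [integral_sub hg (integrable_const _)]; simpa using h1
  filter_upwards [ae_bddAbove_birk h (hgm.sub_const c') (hg.sub (integrable_const _)) hneg]
    with x hx
  obtain ⟨C, hC⟩ := hx
  have ht : Tendsto (fun n : ℕ => (n : ℝ) * (c - c')) atTop atTop :=
    tendsto_natCast_atTop_atTop.atTop_mul_const (by linarith)
  filter_upwards [ht.eventually_ge_atTop C] with n hn
  have := hC n
  rw [birk_sub_const] at this
  linarith

lemma ae_eventually_le_birk {f : Ω → Ω} {ν : Measure Ω} [IsProbabilityMeasure ν] (h : Ergodic f ν)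
    {g : Ω → ℝ} (hgm : Measurable g) (hg : Integrable g ν) {c : ℝ} (hc : c < ∫ x, g x ∂ν) :
    ∀ᵐ x ∂ν, ∀ᶠ n : ℕ in atTop, n * c ≤ birk f g n x := by
  have : ∫ x, - g x ∂ν < - c := by rw [integral_neg]; linarith
  filter_upwards [ae_eventually_birk_le h hgm.neg hg.neg this] with x hx
  filter_upwards [hx] with n hn
  have h2 := birk_neg f g n x
  have h3 : birk f (-g) n x = - birk f g n x := h2
  rw [h3] at hn
  linarith

/-- Birkhoff's ergodic theorem for an ergodic probability measure. -/
lemma ae_tendsto_birk {f : Ω → Ω} {ν : Measure Ω} [IsProbabilityMeasure ν] (h : Ergodic f ν)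
    {g : Ω → ℝ} (hgm : Measurable g) (hg : Integrable g ν) :
    ∀ᵐ x ∂ν, Tendsto (fun n : ℕ => birk f g n x / n) atTop (𝓝 (∫ x, g x ∂ν)) := by
  have h1 : ∀ k : ℕ, ∀ᵐ x ∂ν, ∀ᶠ n : ℕ in atTop,
      birk f g n x ≤ n * (∫ x, g x ∂ν + 1 / (k + 1)) := fun k =>
    ae_eventually_birk_le h hgm hg (by simp only [lt_add_iff_pos_right]; positivity)
  have h2 : ∀ k : ℕ, ∀ᵐ x ∂ν, ∀ᶠ n : ℕ in atTop,
      n * (∫ x, g x ∂ν - 1 / (k + 1)) ≤ birk f g n x := fun k =>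
    ae_eventually_le_birk h hgm hg (by simp only [sub_lt_self_iff]; positivity)
  filter_upwards [ae_all_iff.2 h1, ae_all_iff.2 h2] with x hx1 hx2
  rw [Metric.tendsto_atTop']
  intro ε hε
  obtain ⟨k, hk⟩ := exists_nat_one_div_lt hε
  obtain ⟨N, hN⟩ := eventually_atTop.1 ((hx1 k).and (hx2 k))
  refine ⟨N, fun n hn => ?_⟩
  have hn0 : (0 : ℝ) < n := by exact_mod_cast (Nat.zero_le N).trans_lt hn
  obtain ⟨ha, hb⟩ := hN n hn.le
  rw [← div_le_iff₀' hn0] at ha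
  rw [← le_div_iff₀' hn0] at hb
  rw [Real.dist_eq, abs_lt]
  constructor <;> linarith

end Birkhoff

/-! ### The lower half of the Shannon–McMillan–Breiman theorem -/

section Names

variable {Ω : Type*}

/-- The name of length `n` of a point `x`, for the finite partition into level sets of `ι`. -/
def word (f : Ω → Ω) {m : ℕ} (ι : Ω → Fin m) (n : ℕ) (x : Ω) : Fin n → Fin m :=
  fun k => ι (f^[(k : ℕ)] x)

lemma word_succ (f : Ω → Ω) {m : ℕ} (ι : Ω → Fin m) (n : ℕ) (x : Ω) :
    word f ι (n + 1) x = Fin.cons (ι x) (word f ι n (f x)) := by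
  ext k
  refine Fin.cases ?_ (fun k => ?_) k <;> simp [word]

/-- The truncated information `min (-log p) M`, continuous in `p`. -/
def truncInfo (M p : ℝ) : ℝ := - Real.log (max p (Real.exp (-M)))

lemma continuous_truncInfo (M : ℝ) : Continuous (truncInfo M) := by
  refine (Continuous.log (by fun_prop) fun p => ?_).neg
  exact (lt_max_of_lt_right (Real.exp_pos _)).ne'

lemma truncInfo_nonneg {M p : ℝ} (hM : 0 ≤ M) (hp : p ≤ 1) : 0 ≤ truncInfo M p := by
  rw [truncInfo, neg_nonneg]
  refine Real.log_nonpos (le_max_of_le_right (Real.exp_pos _).le) (max_le hp ?_)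
  simpa using hM

lemma truncInfo_le (M p : ℝ) : truncInfo M p ≤ M := by
  rw [truncInfo, neg_le, Real.le_log_iff_exp_le (lt_max_of_lt_right (Real.exp_pos _))]
  exact le_max_right _ _

lemma le_exp_truncInfo (M p : ℝ) : p ≤ Real.exp (- truncInfo M p) := by
  rw [truncInfo, neg_neg, Real.exp_log (lt_max_of_lt_right (Real.exp_pos _))]
  exact le_max_left _ _

variable [MeasurableSpace Ω]

/-- The mass of the cylinder of points with name `w`. -/
def cyl (ν : Measure Ω) (f : Ω → Ω) {m : ℕ} (ι : Ω → Fin m) {n : ℕ} (w : Fin n → Fin m) : ℝ :=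
  ν.real {y | word f ι n y = w}

/-- The conditional probability of the first letter of `x` given the next `n` letters. -/
def firstProb (ν : Measure Ω) (f : Ω → Ω) {m : ℕ} (ι : Ω → Fin m) (n : ℕ) (x : Ω) : ℝ :=
  cyl ν f ι (word f ι (n + 1) x) / cyl ν f ι (word f ι n (f x))

variable {ν : Measure Ω} {f : Ω → Ω} {m : ℕ} {ι : Ω → Fin m}

lemma cyl_nonneg {n : ℕ} (w : Fin n → Fin m) : 0 ≤ cyl ν f ι w := measureReal_nonneg

lemma measurable_word (hf : Measurable f) (hι : Measurable ι) (n : ℕ) :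
    Measurable (word f ι n) :=
  measurable_pi_lambda _ fun k => hι.comp (hf.iterate k)

lemma measurableSet_word_eq (hf : Measurable f) (hι : Measurable ι) {n : ℕ} (w : Fin n → Fin m) :
    MeasurableSet {y | word f ι n y = w} :=
  measurable_word hf hι n (measurableSet_singleton w)

lemma cyl_eq_shift (hf : MeasurePreserving f ν ν) (hι : Measurable ι) {n : ℕ}
    (w : Fin n → Fin m) : ν.real {y | word f ι n (f y) = w} = cyl ν f ι w :=
  hf.measureReal_preimage (measurableSet_word_eq hf.measurable hι w).nullMeasurableSet

lemma cyl_cons_eq (i : Fin m) {n : ℕ} (w : Fin n → Fin m) :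
    cyl ν f ι (Fin.cons i w : Fin (n + 1) → Fin m)
      = ν.real ({y | word f ι n (f y) = w} ∩ {y | ι y = i}) := by
  rw [cyl]
  congr 1
  ext y
  simp [word_succ, Fin.cons_inj, and_comm]

lemma cyl_cons_le [IsProbabilityMeasure ν] (hf : MeasurePreserving f ν ν) (hι : Measurable ι)
    (i : Fin m) {n : ℕ} (w : Fin n → Fin m) :
    cyl ν f ι (Fin.cons i w : Fin (n + 1) → Fin m) ≤ cyl ν f ι w := by
  rw [cyl_cons_eq, ← cyl_eq_shift hf hι]
  exact measureReal_mono inter_subset_left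

lemma sum_cyl_cons [IsProbabilityMeasure ν] (hf : MeasurePreserving f ν ν) (hι : Measurable ι)
    {n : ℕ} (w : Fin n → Fin m) :
    ∑ i, cyl ν f ι (Fin.cons i w : Fin (n + 1) → Fin m) = cyl ν f ι w := by
  simp_rw [cyl_cons_eq]
  rw [← cyl_eq_shift hf hι, ← measureReal_biUnion_finset]
  · congr 1
    ext y
    simp
  · intro i _ j _ hij
    refine Set.disjoint_left.2 fun y hy hy' => hij ?_
    exact hy.2.symm.trans hy'.2
  · exact fun i _ => ((measurable_word hf.measurable hι n).comp hf.measurable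
      (measurableSet_singleton w)).inter (hι (measurableSet_singleton i))

lemma sum_cyl [IsProbabilityMeasure ν] (hf : MeasurePreserving f ν ν) (hι : Measurable ι) (n : ℕ) :
    ∑ w : Fin n → Fin m, cyl ν f ι w = 1 := by
  have := measureReal_biUnion_finset (μ := ν) (s := (Finset.univ : Finset (Fin n → Fin m)))
    (f := fun w => {y | word f ι n y = w})
    (fun i _ j _ hij => Set.disjoint_left.2 fun y hy hy' => hij (hy.symm.trans hy'))
    (fun w _ => measurableSet_word_eq hf.measurable hι w)
  rw [show (fun w : Fin n → Fin m => cyl ν f ι w)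
    = fun w => ν.real {y | word f ι n y = w} from rfl, ← this]
  have h2 : (⋃ w ∈ (Finset.univ : Finset (Fin n → Fin m)), {y | word f ι n y = w}) = univ := by
    ext y; simp
  rw [h2, probReal_univ]

lemma firstProb_le_one [IsProbabilityMeasure ν] (hf : MeasurePreserving f ν ν)
    (hι : Measurable ι) (n : ℕ) (x : Ω) : firstProb ν f ι n x ≤ 1 := by
  rw [firstProb, word_succ]
  exact div_le_one_of_le₀ (cyl_cons_le hf hι _ _) (cyl_nonneg _)

lemma measurable_firstProb (hf : Measurable f) (hι : Measurable ι) (n : ℕ) :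
    Measurable (firstProb ν f ι n) := by
  refine Measurable.div ?_ ?_
  · exact (measurable_of_finite (cyl ν f ι)).comp (measurable_word hf hι (n + 1))
  · exact (measurable_of_finite (cyl ν f ι)).comp ((measurable_word hf hι n).comp hf)

/-- Chain rule: the mass of the cylinder around `x` is the product of the conditional
probabilities of its letters given the following ones. -/
lemma cyl_word_le [IsProbabilityMeasure ν] (hf : MeasurePreserving f ν ν) (hι : Measurable ι)
    (M : ℝ) (n : ℕ) (x : Ω) :
    cyl ν f ι (word f ι n x)
      ≤ Real.exp (- ∑ k ∈ Finset.range n, truncInfo M (firstProb ν f ι (n - 1 - k) (f^[k] x))) := by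
  induction n generalizing x with
  | zero => simp [cyl]
  | succ n ih =>
    have h1 : cyl ν f ι (word f ι (n + 1) x)
        = firstProb ν f ι n x * cyl ν f ι (word f ι n (f x)) := by
      rcases eq_or_ne (cyl ν f ι (word f ι n (f x))) 0 with h0 | h0
      · rw [h0, mul_zero]
        refine le_antisymm ?_ (cyl_nonneg _)
        rw [word_succ, ← h0]
        exact cyl_cons_le hf hι _ _
      · rw [firstProb, div_mul_cancel₀ _ h0]
    rw [h1, Finset.sum_range_succ', neg_add, add_comm, Real.exp_add]
    refine mul_le_mul (le_exp_truncInfo M _) ((ih (f x)).trans (le_of_eq ?_)) (cyl_nonneg _)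
      (Real.exp_pos _).le
    congr 2
    refine Finset.sum_congr rfl fun k _ => ?_
    rw [Function.iterate_succ_apply]
    congr 2
    omega

/-- The σ-algebra generated by the letters at times `1, …, n`. -/
def futureFiltration (hf : Measurable f) (hι : Measurable ι) :
    Filtration ℕ (inferInstance : MeasurableSpace Ω) where
  seq n := MeasurableSpace.comap (fun x => word f ι n (f x)) ⊤
  mono' := by
    refine monotone_nat_of_le_succ fun n => ?_
    have : (fun x => word f ι n (f x))
        = (fun w : Fin (n + 1) → Fin m => fun k : Fin n => w k.castSucc) ∘
          fun x => word f ι (n + 1) (f x) := by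
      ext x k; simp [word]
    rw [this, ← MeasurableSpace.comap_comp]
    exact MeasurableSpace.comap_mono le_top
  le' n := by
    rintro _ ⟨s, -, rfl⟩
    exact ((measurable_word hf hι n).comp hf) s.toFinite.measurableSet

lemma condProb_ae_eq [IsProbabilityMeasure ν] (hf : MeasurePreserving f ν ν) (hι : Measurable ι)
    (i : Fin m) (n : ℕ) :
    (fun x => cyl ν f ι (Fin.cons i (word f ι n (f x)) : Fin (n + 1) → Fin m)
        / cyl ν f ι (word f ι n (f x)))
      =ᵐ[ν] ν[{y | ι y = i}.indicator (fun _ => (1 : ℝ)) | futureFiltration hf.measurable hι n] := by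
  set N : Ω → Fin n → Fin m := fun x => word f ι n (f x) with hN
  have hNm : Measurable N := (measurable_word hf.measurable hι n).comp hf.measurable
  set G : (Fin n → Fin m) → ℝ :=
    fun w => cyl ν f ι (Fin.cons i w : Fin (n + 1) → Fin m) / cyl ν f ι w with hG
  have hA : MeasurableSet {y | ι y = i} := hι (measurableSet_singleton i)
  have hGm : StronglyMeasurable[futureFiltration hf.measurable hι n] fun x => G (N x) := by
    have h1 : @Measurable _ _ (MeasurableSpace.comap N ⊤) ⊤ N := comap_measurable N
    exact ((measurable_from_top (f := G)).comp h1).stronglyMeasurable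
  have hGint : Integrable (fun x => G (N x)) ν := by
    refine Integrable.of_bound (C := 1)
      ((measurable_of_finite G).comp hNm).aestronglyMeasurable (ae_of_all _ fun x => ?_)
    rw [Real.norm_of_nonneg (div_nonneg (cyl_nonneg _) (cyl_nonneg _))]
    exact div_le_one_of_le₀ (cyl_cons_le hf hι _ _) (cyl_nonneg _)
  refine ae_eq_condExp_of_forall_setIntegral_eq ((futureFiltration hf.measurable hι).le n)
    ((integrable_const _).indicator hA) (fun _ _ _ => hGint.integrableOn) ?_
    hGm.aestronglyMeasurable
  rintro _ ⟨T, -, rfl⟩ -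
  -- decompose the set into the finitely many cylinders it consists of
  have hT : N ⁻¹' T = ⋃ w ∈ T.toFinite.toFinset, N ⁻¹' {w} := by ext y; simp
  have hdisj : Set.Pairwise (↑T.toFinite.toFinset) (Function.onFun Disjoint fun w => N ⁻¹' {w}) :=
    fun i _ j _ hij => Set.disjoint_left.2 fun y hy hy' => hij (hy.symm.trans hy')
  have hm : ∀ w ∈ T.toFinite.toFinset, MeasurableSet (N ⁻¹' {w}) :=
    fun w _ => hNm (measurableSet_singleton w)
  rw [hT, integral_biUnion_finset _ hm hdisj fun _ _ => hGint.integrableOn,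
    integral_biUnion_finset _ hm hdisj
      fun _ _ => ((integrable_const _).indicator hA).integrableOn]
  refine Finset.sum_congr rfl fun w hw => ?_
  rw [setIntegral_congr_fun (g := fun _ => G w) (hm w hw) (fun x hx => by
    simp only [mem_preimage, mem_singleton_iff] at hx; simp only [hx]),
    setIntegral_const, setIntegral_indicator hA, setIntegral_const, smul_eq_mul, smul_eq_mul,
    mul_one, ← show _ = ν.real (N ⁻¹' {w} ∩ {y | ι y = i}) from cyl_cons_eq i w,
    show ν.real (N ⁻¹' {w}) = cyl ν f ι w from cyl_eq_shift hf hι w]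
  simp only [hG]
  rcases eq_or_ne (cyl ν f ι w) 0 with h0 | h0
  · rw [h0, zero_mul]
    exact (le_antisymm ((cyl_cons_le hf hι i w).trans h0.le) (cyl_nonneg _)).symm
  · field_simp

/-- Lévy's upward theorem for the conditional probabilities of the first letter. -/
lemma ae_exists_tendsto_firstProb [IsProbabilityMeasure ν] (hf : MeasurePreserving f ν ν)
    (hι : Measurable ι) :
    ∀ᵐ x ∂ν, ∃ p, Tendsto (fun n => firstProb ν f ι n x) atTop (𝓝 p) := by
  have h1 : ∀ i : Fin m, ∀ n : ℕ, _ := fun i n => condProb_ae_eq (ν := ν) hf hι i n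
  have h2 : ∀ i : Fin m, _ := fun i => tendsto_ae_condExp (μ := ν)
    (ℱ := futureFiltration hf.measurable hι) ({y | ι y = i}.indicator (fun _ => (1 : ℝ)))
  filter_upwards [ae_all_iff.2 fun i => ae_all_iff.2 (h1 i), ae_all_iff.2 h2] with x hx1 hx2
  refine ⟨_, (hx2 (ι x)).congr fun n => ?_⟩
  rw [← hx1 (ι x) n, firstProb, word_succ]

/-- The entropy of the partition into cylinders of length `n`. -/
def wordEnt (ν : Measure Ω) (f : Ω → Ω) {m : ℕ} (ι : Ω → Fin m) (n : ℕ) : ℝ :=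
  ∑ w : Fin n → Fin m, -(cyl ν f ι w * Real.log (cyl ν f ι w))

lemma info_sub_truncInfo_le {a b M : ℝ} (ha : 0 ≤ a) (hab : a ≤ b) :
    a * (Real.log b - Real.log a) ≤ a * truncInfo M (a / b) + b * Real.exp (-M) := by
  rcases ha.eq_or_lt with rfl | ha
  · simp only [zero_mul, zero_add]; positivity
  have hb : 0 < b := ha.trans_le hab
  have hp : 0 < a / b := by positivity
  set e := Real.exp (-M)
  have he : 0 < e := Real.exp_pos _
  have key : Real.log (max (a / b) e) ≤ Real.log (a / b) + e * (b / a) := by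
    have h1 : max (a / b) e ≤ (a / b) * Real.exp (e * (b / a)) := by
      refine max_le (le_mul_of_one_le_right hp.le (Real.one_le_exp (by positivity))) ?_
      have := Real.add_one_le_exp (e * (b / a))
      calc e = a / b * (e * (b / a)) := by field_simp
        _ ≤ _ := by gcongr; linarith
    refine (Real.log_le_log (lt_max_of_lt_left hp) h1).trans (le_of_eq ?_)
    rw [Real.log_mul hp.ne' (Real.exp_pos _).ne', Real.log_exp]
  rw [Real.log_div ha.ne' hb.ne'] at key
  rw [truncInfo]
  have h2 : a * (e * (b / a)) = b * e := by field_simp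
  have h3 := mul_le_mul_of_nonneg_left key ha.le
  rw [mul_add, h2] at h3
  linarith

/-- Truncation at `M` loses at most `m * exp (-M)` of the entropy increment. -/
lemma wordEnt_succ_sub_le [IsProbabilityMeasure ν] (hf : MeasurePreserving f ν ν)
    (hι : Measurable ι) (M : ℝ) (n : ℕ) :
    wordEnt ν f ι (n + 1) - wordEnt ν f ι n
      ≤ ∫ x, truncInfo M (firstProb ν f ι n x) ∂ν + m * Real.exp (-M) := by
  have hW := measurable_word hf.measurable hι (n + 1)
  have hint : ∫ x, truncInfo M (firstProb ν f ι n x) ∂ν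
      = ∑ w : Fin (n + 1) → Fin m, cyl ν f ι w *
        truncInfo M (cyl ν f ι w / cyl ν f ι (Fin.tail w)) := by
    set F : (Fin (n + 1) → Fin m) → ℝ :=
      fun w => truncInfo M (cyl ν f ι w / cyl ν f ι (Fin.tail w)) with hF
    have h1 : (fun x => truncInfo M (firstProb ν f ι n x)) = fun x => F (word f ι (n + 1) x) := by
      ext x
      simp only [hF, firstProb, word_succ, Fin.tail_cons]
    have : IsProbabilityMeasure (ν.map (word f ι (n + 1))) :=
      Measure.isProbabilityMeasure_map hW.aemeasurable
    rw [h1, ← integral_map (f := F) hW.aemeasurable (measurable_of_finite _).aestronglyMeasurable,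
      integral_fintype (Integrable.of_finite)]
    refine Finset.sum_congr rfl fun w _ => ?_
    rw [map_measureReal_apply hW (measurableSet_singleton w)]
    rfl
  have hcons : ∀ F : (Fin (n + 1) → Fin m) → ℝ,
      ∑ w, F w = ∑ v : Fin n → Fin m, ∑ i : Fin m, F (Fin.cons i v) := fun F => by
    rw [← (Fin.consEquiv fun _ => Fin m).sum_comp, Fintype.sum_prod_type_right]
    rfl
  have hn : wordEnt ν f ι n = ∑ v : Fin n → Fin m, ∑ i : Fin m,
      -(cyl ν f ι (Fin.cons i v : Fin (n + 1) → Fin m) * Real.log (cyl ν f ι v)) := by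
    refine Finset.sum_congr rfl fun v _ => ?_
    rw [Finset.sum_neg_distrib, ← Finset.sum_mul, sum_cyl_cons hf hι]
  have hlast : (m : ℝ) * Real.exp (-M)
      = ∑ v : Fin n → Fin m, ∑ i : Fin m, cyl ν f ι v * Real.exp (-M) := by
    simp only [Finset.sum_const, Finset.card_univ, Fintype.card_fin, nsmul_eq_mul]
    rw [← Finset.mul_sum, ← Finset.sum_mul, sum_cyl hf hι, one_mul]
  rw [hint, hcons, wordEnt, hcons, hn, hlast, ← Finset.sum_sub_distrib, ← Finset.sum_add_distrib]
  refine Finset.sum_le_sum fun v _ => ?_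
  rw [← Finset.sum_sub_distrib, ← Finset.sum_add_distrib]
  refine Finset.sum_le_sum fun i _ => ?_
  have := info_sub_truncInfo_le (M := M) (cyl_nonneg (ν := ν) (f := f) (ι := ι)
    (Fin.cons i v : Fin (n + 1) → Fin m)) (cyl_cons_le hf hι i v)
  rw [Fin.tail_cons]
  linarith

/-- Otherwise all increments from some index on would be below `c`, and so would be the limit points
of the averages. -/
lemma frequently_increment_ge {H : ℕ → ℝ} {η c : ℝ} (hη : ∀ n : ℕ, η ≤ H (n + 1) / (n + 1))
    (hc : c < η) : ∃ᶠ j in atTop, c ≤ H (j + 1) - H j := by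
  intro hcon
  obtain ⟨J, hJ⟩ := eventually_atTop.1 hcon
  have h1 : ∀ n : ℕ, H (J + n) ≤ H J + n * c := by
    intro n
    induction n with
    | zero => simp
    | succ n ih =>
      have := not_le.1 (hJ (J + n) (Nat.le_add_right _ _))
      rw [← add_assoc]
      push_cast
      linarith
  obtain ⟨n, hn⟩ := exists_nat_gt ((H J - J * η) / (η - c))
  rw [div_lt_iff₀ (by linarith)] at hn
  have h2 := hη (J + n)
  have h3 := h1 (n + 1)
  rw [le_div_iff₀ (by positivity)] at h2
  rw [← add_assoc] at h3
  push_cast at h2 h3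
  linarith

lemma tendsto_iInf_tail {t : ℕ → ℝ} {a : ℝ} (hb : BddBelow (range t))
    (ht : Tendsto t atTop (𝓝 a)) : Tendsto (fun J => ⨅ j, t (J + j)) atTop (𝓝 a) := by
  rw [Metric.tendsto_atTop] at ht ⊢
  intro ε hε
  obtain ⟨N, hN⟩ := ht (ε / 2) (by positivity)
  refine ⟨N, fun J hJ => ?_⟩
  have hb' : BddBelow (range fun j => t (J + j)) :=
    hb.mono (range_subset_iff.2 fun j => mem_range_self (J + j))
  have h1 : (⨅ j, t (J + j)) ≤ t (J + 0) := ciInf_le hb' 0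
  have h2 : a - ε / 2 ≤ ⨅ j, t (J + j) := by
    refine le_ciInf fun j => ?_
    have := abs_lt.1 (hN (J + j) (by omega))
    linarith
  have h3 := abs_lt.1 (hN (J + 0) (by omega))
  rw [Real.dist_eq, abs_lt]
  constructor <;> linarith

/-- Lower half of the Shannon–McMillan–Breiman theorem: cylinders of length `n` eventually have mass
at most `exp (-n c)`, for each `c` below the entropy rate. This is Breiman's argument; truncating
the information makes it bounded, which suffices for this half. -/
theorem ae_eventually_cyl_le [IsProbabilityMeasure ν] (h : Ergodic f ν) (hι : Measurable ι)
    {η c : ℝ} (hη : ∀ n : ℕ, η ≤ wordEnt ν f ι (n + 1) / (n + 1)) (hc : c < η) :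
    ∀ᵐ x ∂ν, ∀ᶠ n : ℕ in atTop, cyl ν f ι (word f ι n x) ≤ Real.exp (-(n * c)) := by
  have hf := h.toMeasurePreserving
  obtain ⟨M, hM0, hM⟩ : ∃ M : ℝ, 0 ≤ M ∧ m * Real.exp (-M) ≤ (η - c) / 4 := by
    have h1 : Tendsto (fun M : ℝ => m * Real.exp (-M)) atTop (𝓝 (m * 0)) :=
      (Real.tendsto_exp_atBot.comp tendsto_neg_atTop_atBot).const_mul _
    rw [mul_zero] at h1
    obtain ⟨M, h2, h3⟩ := ((h1.eventually_le_const (show 0 < (η - c) / 4 by linarith)).and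
      (eventually_ge_atTop 0)).exists
    exact ⟨M, h3, h2⟩
  set T : ℕ → Ω → ℝ := fun j x => truncInfo M (firstProb ν f ι j x) with hT
  have hT0 : ∀ j x, 0 ≤ T j x := fun j x => truncInfo_nonneg hM0 (firstProb_le_one hf hι j x)
  have hTM : ∀ j x, T j x ≤ M := fun j x => truncInfo_le _ _
  have hTm : ∀ j, Measurable (T j) := fun j =>
    (continuous_truncInfo M).measurable.comp (measurable_firstProb hf.measurable hι j)
  set L : ℕ → Ω → ℝ := fun J x => ⨅ j, T (J + j) x with hL
  have hbdd : ∀ J x, BddBelow (range fun j => T (J + j) x) := fun J x =>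
    ⟨0, by rintro _ ⟨j, rfl⟩; exact hT0 _ _⟩
  have hL0 : ∀ J x, 0 ≤ L J x := fun J x => le_ciInf fun j => hT0 _ _
  have hLT : ∀ J j x, J ≤ j → L J x ≤ T j x := fun J j x hj => by
    have := ciInf_le (hbdd J x) (j - J)
    simp only [Nat.add_sub_cancel' hj] at this
    exact this
  have hLm : ∀ J, Measurable (L J) := fun J => Measurable.iInf fun j => hTm _
  have hTi : ∀ j, Integrable (T j) ν := fun j =>
    Integrable.of_bound (C := M) (hTm j).aestronglyMeasurable
      (ae_of_all _ fun x => by rw [Real.norm_of_nonneg (hT0 j x)]; exact hTM j x)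
  have hLi : ∀ j, Integrable (L j) ν := fun j =>
    Integrable.of_bound (C := M) (hLm j).aestronglyMeasurable
      (ae_of_all _ fun x => by
        rw [Real.norm_of_nonneg (hL0 j x)]; exact (hLT j j x le_rfl).trans (hTM j x))
  have hdiff : Tendsto (fun J => ∫ x, (T J x - L J x) ∂ν) atTop (𝓝 (∫ _, (0 : ℝ) ∂ν)) := by
    refine tendsto_integral_of_dominated_convergence (fun _ => M)
      (fun J => ((hTm J).sub (hLm J)).aestronglyMeasurable) (integrable_const _) ?_ ?_
    · refine fun J => ae_of_all _ fun x => ?_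
      rw [Real.norm_of_nonneg (sub_nonneg.2 (hLT J J x le_rfl))]
      linarith [hTM J x, hL0 J x]
    · filter_upwards [ae_exists_tendsto_firstProb (ν := ν) hf hι] with x hx
      obtain ⟨p, hp⟩ := hx
      have h1 : Tendsto (fun j => T j x) atTop (𝓝 (truncInfo M p)) :=
        ((continuous_truncInfo M).tendsto p).comp hp
      have h2 := h1.sub (tendsto_iInf_tail (t := fun j => T j x)
        ⟨0, by rintro _ ⟨j, rfl⟩; exact hT0 _ _⟩ h1)
      rwa [sub_self] at h2
  rw [integral_zero] at hdiff
  obtain ⟨J, hJ1, hJ2⟩ := ((frequently_increment_ge hη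
    (show η - (η - c) / 4 < η by linarith)).and_eventually
      (hdiff.eventually_lt_const (show 0 < (η - c) / 4 by linarith))).exists
  have hJ3 : c < ∫ x, L J x ∂ν := by
    have h1 := wordEnt_succ_sub_le (ν := ν) hf hι M J
    rw [integral_sub (hTi J) (hLi J)] at hJ2
    have h2 : ∫ x, truncInfo M (firstProb ν f ι J x) ∂ν = ∫ x, T J x ∂ν := rfl
    linarith
  obtain ⟨c', hc1, hc2⟩ := exists_between hJ3
  have htop : Tendsto (fun n : ℕ => (n : ℝ) * (c' - c)) atTop atTop :=
    tendsto_natCast_atTop_atTop.atTop_mul_const (by linarith)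
  filter_upwards [ae_eventually_le_birk h (hLm J) (hLi J) hc2] with x hx
  filter_upwards [hx, htop.eventually_ge_atTop (J * M)] with n hn1 hn2
  refine (cyl_word_le hf hι M n x).trans (Real.exp_le_exp.2 (neg_le_neg ?_))
  have h1 : birk f (L J) n x
      - ∑ k ∈ Finset.range n, truncInfo M (firstProb ν f ι (n - 1 - k) (f^[k] x)) ≤ J * M := by
    rw [birk, ← Finset.sum_sub_distrib]
    -- only the last `J` terms can be positive
    calc ∑ k ∈ Finset.range n, (L J (f^[k] x) - T (n - 1 - k) (f^[k] x))
        ≤ ∑ k ∈ Finset.range n, if n - 1 - k < J then M else 0 := by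
          refine Finset.sum_le_sum fun k _ => ?_
          split_ifs with hk
          · linarith [hT0 (n - 1 - k) (f^[k] x), hLT J J (f^[k] x) le_rfl, hTM J (f^[k] x)]
          · exact sub_nonpos.2 (hLT J _ _ (not_lt.1 hk))
      _ = ∑ k ∈ Finset.range n, if k < J then M else 0 :=
          Finset.sum_range_reflect (fun k => if k < J then M else 0) n
      _ ≤ J * M := by
          rw [← Finset.sum_filter, Finset.sum_const, nsmul_eq_mul]
          gcongr
          calc _ ≤ (Finset.range J).card :=
                Finset.card_le_card fun k hk => by simp at hk ⊢; exact hk.2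
            _ = J := Finset.card_range J
  linarith

end Names

/-! ### Measure of Bowen balls and the entropy distribution principle -/

section LowerBound

/-- The total weight of the words, discounted by `z` per letter in which they differ from `r`. -/
lemma sum_hamming_le {m n : ℕ} (r : Fin n → Fin m) {z : ℝ} (hz : 0 ≤ z) :
    ∑ w : Fin n → Fin m, z ^ (Finset.univ.filter fun k => w k ≠ r k).card ≤ (1 + m * z) ^ n := by
  have h1 : ∀ w : Fin n → Fin m, z ^ (Finset.univ.filter fun k => w k ≠ r k).card
      = ∏ k, if w k = r k then 1 else z := fun w => by
    rw [Finset.prod_ite, Finset.prod_const_one, one_mul, Finset.prod_const]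
  simp_rw [h1]
  have h2 := (Finset.prod_univ_sum (fun _ : Fin n => (Finset.univ : Finset (Fin m)))
    fun k i => if i = r k then (1 : ℝ) else z).symm
  rw [Fintype.piFinset_univ] at h2
  rw [h2]
  calc _ ≤ ∏ _k : Fin n, (1 + m * z) := by
        refine Finset.prod_le_prod (fun k _ => Finset.sum_nonneg fun i _ => by
          split_ifs <;> positivity) fun k _ => ?_
        calc ∑ i, (if i = r k then (1 : ℝ) else z) ≤ ∑ i, ((if i = r k then (1 : ℝ) else 0) + z) :=
              Finset.sum_le_sum fun i _ => by split_ifs <;> linarith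
          _ = 1 + m * z := by simp [Finset.sum_add_distrib]
    _ = _ := by simp

lemma birk_dist_le {f : X → X} {w : X → ℝ} {δ σ : ℝ}
    (hw : ∀ x y, dist x y < δ → |w x - w y| ≤ σ) {n : ℕ} {x y : X} (hy : y ∈ bowenBall f x n δ) :
    |birk f w n x - birk f w n y| ≤ n * σ := by
  rw [birk, birk, ← Finset.sum_sub_distrib]
  calc _ ≤ ∑ k ∈ Finset.range n, |w (f^[k] x) - w (f^[k] y)| := Finset.abs_sum_le_sum_abs _ _
    _ ≤ ∑ _k ∈ Finset.range n, σ :=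
        Finset.sum_le_sum fun k hk => hw _ _ (hy k (Finset.mem_range.1 hk))
    _ = n * σ := by simp

lemma exists_modulus [CompactSpace X] {w : X → ℝ} (hw : Continuous w) {σ : ℝ} (hσ : 0 < σ) :
    ∃ δ > 0, ∀ x y, dist x y < δ → |w x - w y| ≤ σ := by
  obtain ⟨δ, hδ, h⟩ := Metric.uniformContinuous_iff.1
    (CompactSpace.uniformContinuous_of_continuous hw) σ hσ
  exact ⟨δ, hδ, fun x y hxy => (h hxy).le⟩

variable [MeasurableSpace X] [BorelSpace X] {ν : Measure X}

/-- A Lusin-type statement: a finite-valued measurable map is locally constant, at a uniform scale,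
on a closed set of almost full measure. -/
lemma exists_closed_uniform [CompactSpace X] [IsProbabilityMeasure ν] {m : ℕ} {ι : X → Fin m}
    (hι : Measurable ι) {ε : ℝ} (hε : 0 < ε) :
    ∃ K : Set X, IsClosed K ∧ ν.real Kᶜ < ε ∧
      ∃ δ > 0, ∀ x ∈ K, ∀ y ∈ K, dist x y < δ → ι x = ι y := by
  have h1 : ∀ i : Fin m, ∃ F ⊆ ι ⁻¹' {i}, IsClosed F ∧
      ν (ι ⁻¹' {i} \ F) < ENNReal.ofReal (ε / m) := by
    intro i
    have hm : (0 : ℝ) < m := by exact_mod_cast i.pos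
    exact (hι (measurableSet_singleton i)).exists_isClosed_sdiff_lt (measure_ne_top _ _)
      (by simp only [ne_eq, ENNReal.ofReal_eq_zero, not_le]; positivity)
  choose F hFι hFc hFm using h1
  have hKc : IsClosed (⋃ i, F i) := isClosed_iUnion_of_finite hFc
  have hF : ∀ i, ∀ x ∈ F i, ι x = i := fun i x hx => hFι i hx
  refine ⟨⋃ i, F i, hKc, ?_, ?_⟩
  · have hsub : (⋃ i, F i)ᶜ ⊆ ⋃ i, (ι ⁻¹' {i} \ F i) := by
      intro x hx
      simp only [mem_compl_iff, mem_iUnion, not_exists] at hx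
      exact mem_iUnion.2 ⟨ι x, rfl, hx _⟩
    have hne : (Finset.univ : Finset (Fin m)).Nonempty := by
      obtain ⟨x⟩ := nonempty_of_isProbabilityMeasure ν
      exact ⟨ι x, Finset.mem_univ _⟩
    have hm : (m : ℝ) ≠ 0 := by
      obtain ⟨i, -⟩ := hne
      exact_mod_cast i.pos.ne'
    calc ν.real (⋃ i, F i)ᶜ ≤ ν.real (⋃ i, (ι ⁻¹' {i} \ F i)) := measureReal_mono hsub
      _ ≤ ∑ i, ν.real (ι ⁻¹' {i} \ F i) := measureReal_iUnion_fintype_le _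
      _ < ∑ _i : Fin m, ε / m := by
          refine Finset.sum_lt_sum_of_nonempty hne fun i _ => ?_
          exact (ENNReal.lt_ofReal_iff_toReal_lt (measure_ne_top _ _)).1 (hFm i)
      _ = ε := by simp; field_simp
  · obtain ⟨δ, hδ, hball⟩ := lebesgue_number_lemma_of_metric (s := ⋃ i, F i)
      (c := fun i => (⋃ j, ⋃ (_ : j ≠ i), F j)ᶜ) hKc.isCompact
      (fun i => (isClosed_iUnion_of_finite fun j => isClosed_iUnion_of_finite
        fun _ => hFc j).isOpen_compl) (by
        intro x hx
        obtain ⟨i, hi⟩ := mem_iUnion.1 hx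
        refine mem_iUnion.2 ⟨i, ?_⟩
        simp only [mem_compl_iff, mem_iUnion, not_exists]
        intro j hj hxj
        exact hj ((hF j x hxj).symm.trans (hF i x hi)))
    refine ⟨δ, hδ, fun x hx y hy hxy => ?_⟩
    obtain ⟨i, hi⟩ := hball x hx
    have hval : ∀ z ∈ ⋃ i, F i, z ∈ Metric.ball x δ → ι z = i := by
      intro z hz hzb
      obtain ⟨j, hj⟩ := mem_iUnion.1 hz
      have := hi hzb
      simp only [mem_compl_iff, mem_iUnion, not_exists] at this
      rw [hF j z hj]
      by_contra hji
      exact this j hji hj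
    rw [hval x hx (Metric.mem_ball_self hδ), hval y hy (by rwa [Metric.mem_ball, dist_comm])]

lemma measure_bowenBall_le [CompactSpace X] [IsProbabilityMeasure ν] {f : X → X}
    (h : Ergodic f ν) {m : ℕ} {ι : X → Fin m} (hι : Measurable ι)
    {η c : ℝ} (hη : ∀ n : ℕ, η ≤ wordEnt ν f ι (n + 1) / (n + 1)) (hc : c < η) :
    ∃ δ > 0, ∃ p : ℕ → X → Prop, (∀ᵐ y ∂ν, ∀ᶠ n in atTop, p n y) ∧
      ∀ n x, ν (bowenBall f x n δ ∩ {y | p n y}) ≤ ENNReal.ofReal (Real.exp (-(n * c))) := by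
  obtain ⟨c₁, hc1, hc2⟩ := exists_between hc
  obtain ⟨γ, hγ⟩ : ∃ γ, γ = c₁ - c := ⟨_, rfl⟩
  have hγ0 : 0 < γ := by linarith
  -- discount per wrong letter, and admissible frequency of wrong letters
  obtain ⟨z, hz0, hz1, hz2⟩ : ∃ z : ℝ, 0 < z ∧ z ≤ 1 ∧ m * z ≤ γ / 2 := by
    refine ⟨min 1 (γ / (2 * (m + 1))), by positivity, min_le_left _ _, ?_⟩
    calc m * min 1 (γ / (2 * (m + 1))) ≤ (m + 1) * (γ / (2 * (m + 1))) := by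
          gcongr
          · linarith
          · exact min_le_right _ _
      _ = γ / 2 := by field_simp
  have hlog : Real.log z ≤ 0 := Real.log_nonpos hz0.le hz1
  obtain ⟨ε, hε0, hε⟩ : ∃ ε : ℝ, 0 < ε ∧ ε * (-Real.log z) ≤ γ / 2 := by
    have h1 : 0 < 1 - Real.log z := by linarith
    refine ⟨γ / 2 / (1 - Real.log z), by positivity, ?_⟩
    rw [div_mul_eq_mul_div, div_le_iff₀ h1]
    gcongr
    linarith
  obtain ⟨K, hKc, hKε, δ, hδ, hK⟩ := exists_closed_uniform (ν := ν) hι hε0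
  set g : X → ℝ := Kᶜ.indicator fun _ => 1 with hg
  have hKm : MeasurableSet Kᶜ := hKc.measurableSet.compl
  have hgm : Measurable g := measurable_const.indicator hKm
  have hgi : Integrable g ν := (integrable_const _).indicator hKm
  have hgε : ∫ x, g x ∂ν < ε := by
    rw [hg, integral_indicator hKm]; simpa using hKε
  refine ⟨δ / 2, by positivity, fun n y => cyl ν f ι (word f ι n y) ≤ Real.exp (-(n * c₁)) ∧
    birk f g n y ≤ n * ε, ?_, ?_⟩
  · filter_upwards [ae_eventually_cyl_le h hι hη hc2, ae_eventually_birk_le h hgm hgi hgε]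
      with y h1 h2 using h1.and h2
  intro n x
  set B := bowenBall f x n (δ / 2) with hB
  -- the letter read at time `k` by every point of the ball that is then in `K`
  obtain ⟨r, hr⟩ : ∃ r : Fin n → Fin m, ∀ k : Fin n, ∀ y ∈ B, f^[(k : ℕ)] y ∈ K →
      ι (f^[(k : ℕ)] y) = r k := by
    have : ∀ k : Fin n, ∃ i : Fin m, ∀ y ∈ B, f^[(k : ℕ)] y ∈ K → ι (f^[(k : ℕ)] y) = i := by
      intro k
      by_cases hex : ∃ y ∈ B, f^[(k : ℕ)] y ∈ K
      · obtain ⟨y₀, hy₀, hk₀⟩ := hex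
        refine ⟨ι (f^[(k : ℕ)] y₀), fun y hy hk => hK _ hk _ hk₀ ?_⟩
        have h1 := hy k k.2
        have h2 := hy₀ k k.2
        calc _ ≤ dist (f^[(k : ℕ)] x) (f^[(k : ℕ)] y) + dist (f^[(k : ℕ)] x) (f^[(k : ℕ)] y₀) :=
              dist_triangle_left _ _ _
          _ < δ := by linarith
      · exact ⟨ι x, fun y hy hk => (hex ⟨y, hy, hk⟩).elim⟩
    choose r hr using this
    exact ⟨r, hr⟩
  set d : (Fin n → Fin m) → ℕ := fun w => (Finset.univ.filter fun k => w k ≠ r k).card with hd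
  classical
  set W : Finset (Fin n → Fin m) := Finset.univ.filter fun w =>
    cyl ν f ι w ≤ Real.exp (-(n * c₁)) ∧ (d w : ℝ) ≤ n * ε with hW
  have hcover : B ∩ {y | cyl ν f ι (word f ι n y) ≤ Real.exp (-(n * c₁)) ∧
      birk f g n y ≤ n * ε} ⊆ ⋃ w ∈ W, {y | word f ι n y = w} := by
    rintro y ⟨hy, hy1, hy2⟩
    refine mem_iUnion₂.2 ⟨word f ι n y, ?_, rfl⟩
    simp only [hW, Finset.mem_filter, Finset.mem_univ, true_and]
    refine ⟨hy1, le_trans ?_ hy2⟩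
    have h1 : birk f g n y = ∑ k : Fin n, g (f^[(k : ℕ)] y) := by
      rw [birk, Finset.sum_range]
    rw [h1, hd]
    simp only [Finset.card_filter, Nat.cast_sum]
    refine Finset.sum_le_sum fun k _ => ?_
    by_cases hk : f^[(k : ℕ)] y ∈ K
    · have := hr k y hy hk
      simp [word, this, hg, hk]
    · simp only [hg, indicator, mem_compl_iff, hk, not_false_eq_true, if_true]
      split_ifs <;> simp
  have hterm : ∀ w ∈ W, cyl ν f ι w
      ≤ Real.exp (-(n * c₁)) * Real.exp (n * (γ / 2)) * z ^ d w := by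
    intro w hw
    simp only [hW, Finset.mem_filter, Finset.mem_univ, true_and] at hw
    have h1 : 1 ≤ Real.exp (n * (γ / 2)) * z ^ d w := by
      rw [← Real.rpow_natCast, Real.rpow_def_of_pos hz0, ← Real.exp_add]
      refine Real.one_le_exp ?_
      have h2 := mul_le_mul_of_nonneg_right hw.2 (neg_nonneg.2 hlog)
      have h3 := mul_le_mul_of_nonneg_left hε (Nat.cast_nonneg (α := ℝ) n)
      nlinarith
    rw [mul_assoc]
    exact hw.1.trans (le_mul_of_one_le_right (Real.exp_pos _).le h1)
  have hsum : ∑ w ∈ W, cyl ν f ι w ≤ Real.exp (-(n * c)) := by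
    calc ∑ w ∈ W, cyl ν f ι w
        ≤ ∑ w ∈ W, Real.exp (-(n * c₁)) * Real.exp (n * (γ / 2)) * z ^ d w :=
          Finset.sum_le_sum hterm
      _ ≤ ∑ w, Real.exp (-(n * c₁)) * Real.exp (n * (γ / 2)) * z ^ d w :=
          Finset.sum_le_sum_of_subset_of_nonneg (Finset.subset_univ _)
            fun _ _ _ => by positivity
      _ ≤ Real.exp (-(n * c₁)) * Real.exp (n * (γ / 2)) * (1 + m * z) ^ n := by
          rw [← Finset.mul_sum]
          gcongr
          exact sum_hamming_le r hz0.le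
      _ ≤ Real.exp (-(n * c₁)) * Real.exp (n * (γ / 2)) * Real.exp (γ / 2) ^ n := by
          gcongr
          have := Real.add_one_le_exp (γ / 2)
          linarith
      _ = Real.exp (-(n * c)) := by
          rw [← Real.exp_nat_mul, ← Real.exp_add, ← Real.exp_add]
          congr 1
          rw [hγ]
          ring
  calc _ ≤ ν (⋃ w ∈ W, {y | word f ι n y = w}) := measure_mono hcover
    _ ≤ ∑ w ∈ W, ν {y | word f ι n y = w} := measure_biUnion_finset_le _ _
    _ = ENNReal.ofReal (∑ w ∈ W, cyl ν f ι w) := by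
        rw [ENNReal.ofReal_sum_of_nonneg fun _ _ => cyl_nonneg _]
        refine Finset.sum_congr rfl fun w _ => ?_
        rw [cyl, ofReal_measureReal]
    _ ≤ _ := ENNReal.ofReal_le_ofReal hsum

/-- The entropy `h_ν(f, P)` of a finite partition. -/
def partRate {Ω : Type*} [MeasurableSpace Ω] (f : Ω → Ω) (ν : Measure Ω) {m : ℕ}
    (P : Fin m → Set Ω) : ℝ :=
  ⨅ n : ℕ, partEnt ν (orbitJoin f P (n + 1)) / (n + 1)

lemma partEnt_nonneg {Ω : Type*} [MeasurableSpace Ω] {ν : Measure Ω} [IsProbabilityMeasure ν]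
    {κ : Type*} [Fintype κ] (P : κ → Set Ω) :
    0 ≤ partEnt ν P := by
  refine Finset.sum_nonneg fun i _ => neg_nonneg.2 ?_
  exact mul_nonpos_of_nonneg_of_nonpos ENNReal.toReal_nonneg
    (Real.log_nonpos ENNReal.toReal_nonneg measureReal_le_one)

lemma partRate_le {Ω : Type*} [MeasurableSpace Ω] {ν : Measure Ω} [IsProbabilityMeasure ν]
    (f : Ω → Ω) {m : ℕ} (P : Fin m → Set Ω) (n : ℕ) :
    partRate f ν P ≤ partEnt ν (orbitJoin f P (n + 1)) / (n + 1) := by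
  refine ciInf_le ⟨0, ?_⟩ n
  rintro _ ⟨n, rfl⟩
  exact div_nonneg (partEnt_nonneg _) (by positivity)

lemma partRate_nonneg {Ω : Type*} [MeasurableSpace Ω] {ν : Measure Ω} [IsProbabilityMeasure ν]
    (f : Ω → Ω) {m : ℕ} (P : Fin m → Set Ω) :
    0 ≤ partRate f ν P :=
  le_ciInf fun _ => div_nonneg (partEnt_nonneg _) (by positivity)

/-- Any cover by Bowen balls of a set of full outer measure has weight bounded below, when the
weights come from a potential `w` with `h_ν(f, P) + ∫ w > 0`. It is enough to compare the weights
with `S_n w` at the balls where `S_n v ≥ 0`, for some `v` of positive integral. -/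
lemma coverSum_lower_bound [CompactSpace X] [IsProbabilityMeasure ν] {f : X → X}
    (h : Ergodic f ν) {m : ℕ} {P : Fin m → Set X} (hP : IsFinPartition P)
    {w v : X → ℝ} (hw : Continuous w) (hv : Continuous v)
    (hpos : 0 < partRate f ν P + ∫ x, w x ∂ν) (hvpos : 0 < ∫ x, v x ∂ν) :
    ∃ δ > 0, ∀ Z : Set X, ν Z = 1 → ∃ N : ℕ, ∃ c : ℝ≥0∞, c ≠ 0 ∧
      ∀ E, IsBowenCover f Z N δ E → ∀ W : X × ℕ → ℝ,
        (∀ p, 0 ≤ birk f v p.2 p.1 → birk f w p.2 p.1 ≤ W p) → c ≤ coverSum E W := by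
  obtain ⟨hPm, hPd, hPu⟩ := hP
  have hex : ∀ x, ∃ i, x ∈ P i := fun x => mem_iUnion.1 (hPu ▸ mem_univ x)
  choose ι hι using hex
  have hιP : ∀ x i, ι x = i ↔ x ∈ P i := fun x i =>
    ⟨fun hi => hi ▸ hι x, fun hi => by
      by_contra hne
      exact Set.disjoint_left.1 (hPd _ _ hne) (hι x) hi⟩
  have hιm : Measurable ι := by
    refine measurable_to_countable' fun i => ?_
    have : ι ⁻¹' {i} = P i := by ext x; exact hιP x i
    rw [this]; exact hPm i
  set η := partRate f ν P with hηd
  have hη : ∀ n : ℕ, η ≤ wordEnt ν f ι (n + 1) / (n + 1) := by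
    intro n
    refine (partRate_le f P n).trans (le_of_eq ?_)
    congr 1
    refine Finset.sum_congr rfl fun w _ => ?_
    have : orbitJoin f P (n + 1) w = {y | word f ι (n + 1) y = w} := by
      ext y
      simp only [orbitJoin, mem_iInter, mem_preimage, mem_ofPred_eq, funext_iff, word, hιP]
    rw [this]
    rfl
  set I := ∫ x, w x ∂ν
  set J := ∫ x, v x ∂ν
  obtain ⟨σ, hσd⟩ : ∃ σ, σ = (η + I) / 3 := ⟨_, rfl⟩
  have hσ : 0 < σ := by rw [hσd]; positivity
  have hint : ∀ {g : X → ℝ}, Continuous g → Integrable g ν := fun hg =>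
    hg.integrable_of_hasCompactSupport (HasCompactSupport.of_compactSpace _)
  obtain ⟨δ₁, hδ₁, p, hp, hball⟩ := measure_bowenBall_le h hιm hη (show η - σ < η by linarith)
  obtain ⟨δ₂, hδ₂, hmw⟩ := exists_modulus hw hσ
  obtain ⟨δ₃, hδ₃, hmv⟩ := exists_modulus hv (half_pos hvpos)
  refine ⟨min δ₁ (min δ₂ δ₃), by positivity, fun Z hZ => ?_⟩
  set G : ℕ → Set X := fun N => {y | ∀ n ≥ N, p n y ∧ n * (I - σ) ≤ birk f w n y ∧
    n * (J / 2) ≤ birk f v n y} with hG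
  have hGae : ∀ᵐ y ∂ν, y ∈ ⋃ N, G N := by
    filter_upwards [hp,
      ae_eventually_le_birk h hw.measurable (hint hw) (show I - σ < I by linarith),
      ae_eventually_le_birk h hv.measurable (hint hv) (show J / 2 < J by linarith)]
      with y h1 h2 h3
    obtain ⟨N, hN⟩ := eventually_atTop.1 (h1.and (h2.and h3))
    exact mem_iUnion.2 ⟨N, hN⟩
  obtain ⟨N, hN⟩ : ∃ N, ν (Z ∩ G N) ≠ 0 := by
    by_contra! hcon
    have h1 : ν (⋃ N, Z ∩ G N) = 0 := measure_iUnion_null hcon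
    have h2 : ν (⋃ N, G N)ᶜ = 0 := hGae
    have h3 : ν Z ≤ ν (⋃ N, Z ∩ G N) + ν (⋃ N, G N)ᶜ := by
      refine (measure_mono ?_).trans (measure_union_le _ _)
      intro y hy
      by_cases hyG : y ∈ ⋃ N, G N
      · exact Or.inl (by rw [← inter_iUnion]; exact ⟨hy, hyG⟩)
      · exact Or.inr hyG
    rw [h1, h2, hZ] at h3
    simp at h3
  refine ⟨N, ν (Z ∩ G N), hN, fun E hE W hW => ?_⟩
  obtain ⟨hEc, hEN, hEZ⟩ := hE
  have hmono : ∀ {x n ρ ρ'}, ρ ≤ ρ' → bowenBall f x n ρ ⊆ bowenBall f x n ρ' :=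
    fun hρ y hy k hk => (hy k hk).trans_le hρ
  calc ν (Z ∩ G N) ≤ ν (⋃ q ∈ E, bowenBall f q.1 q.2 (min δ₁ (min δ₂ δ₃)) ∩ G N) := by
        refine measure_mono fun y hy => ?_
        obtain ⟨q, hq, hyq⟩ := mem_iUnion₂.1 (hEZ hy.1)
        exact mem_iUnion₂.2 ⟨q, hq, hyq, hy.2⟩
    _ ≤ ∑' q : E, ν (bowenBall f q.1.1 q.1.2 (min δ₁ (min δ₂ δ₃)) ∩ G N) :=
        measure_biUnion_le ν hEc _
    _ ≤ coverSum E W := by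
        refine ENNReal.tsum_le_tsum fun q => ?_
        obtain ⟨⟨x, n⟩, hq⟩ := q
        have hnN : N ≤ n := (hEN _ hq).2
        simp only
        rcases (bowenBall f x n (min δ₁ (min δ₂ δ₃)) ∩ G N).eq_empty_or_nonempty with h0 | ⟨y, hy⟩
        · simp [h0]
        obtain ⟨hyB, hyG⟩ := hy
        obtain ⟨-, hy1, hy2⟩ := hyG n hnN
        have h1 := abs_le.1 (birk_dist_le hmw
          (hmono ((min_le_right _ _).trans (min_le_left _ _)) hyB))
        have h2 := abs_le.1 (birk_dist_le hmv
          (hmono ((min_le_right _ _).trans (min_le_right _ _)) hyB))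
        have h3 := hW (x, n) (by simp only; linarith)
        refine (measure_mono ?_).trans ((hball n x).trans
          (ENNReal.ofReal_le_ofReal (Real.exp_le_exp.2 (le_trans ?_ h3))))
        · exact fun z hz => ⟨hmono (min_le_left _ _) hz.1, (hz.2 n hnN).1⟩
        · have : (n : ℝ) * (η - σ) = - (n * (I - σ)) + n * σ := by rw [hσd]; ring
          simp only
          linarith

end LowerBound

/-! ### Consequences of the lower bound on covers -/

section Consequences

lemma continuous_potential {φ ψ u : X → ℝ} (hφ : Continuous φ) (hψ : Continuous ψ)
    (hu : Continuous u) (α q t : ℝ) : Continuous (potential φ ψ u α q t) := by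
  unfold potential
  fun_prop

lemma birk_potential {Ω : Type*} (f : Ω → Ω) (φ ψ u : Ω → ℝ) (α q t : ℝ) (n : ℕ) (x : Ω) :
    birk f (potential φ ψ u α q t) n x
      = q * (birk f φ n x - α * birk f ψ n x) - t * birk f u n x := by
  simp [birk, potential, Finset.sum_sub_distrib, Finset.mul_sum, mul_sub]

variable [MeasurableSpace X] {ν : Measure X}

/-- The trivial partition: the supremum defining the entropy is not over an empty family. -/
lemma isFinPartition_univ {Ω : Type*} [MeasurableSpace Ω] :
    IsFinPartition (fun _ : Fin 1 => (univ : Set Ω)) :=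
  ⟨fun _ => MeasurableSet.univ, fun i j h => (h (Subsingleton.elim i j)).elim,
    iUnion_const univ⟩

/-- A bound for the entropy of all finite partitions bounds the Kolmogorov–Sinai entropy. -/
lemma kolSinai_le {Ω : Type*} [MeasurableSpace Ω] {ν : Measure Ω} [IsProbabilityMeasure ν]
    {f : Ω → Ω} {a : ℝ} (h : ∀ (m : ℕ) (P : Fin m → Set Ω), IsFinPartition P → partRate f ν P ≤ a) :
    kolSinai f ν ≤ a := by
  have ha : 0 ≤ a := (partRate_nonneg f _).trans (h 1 _ isFinPartition_univ)
  exact Real.iSup_le (fun m => Real.iSup_le (fun P => Real.iSup_le (fun hP => h m P hP) ha) ha) ha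

lemma exists_lt_partRate {Ω : Type*} [MeasurableSpace Ω] {ν : Measure Ω} [IsProbabilityMeasure ν]
    {f : Ω → Ω} {a : ℝ} (ha : a < kolSinai f ν) :
    ∃ (m : ℕ) (P : Fin m → Set Ω), IsFinPartition P ∧ a < partRate f ν P := by
  by_contra! h
  exact absurd (kolSinai_le h) (not_le.2 ha)

lemma coe_le_sInf {m : ℝ → ℝ≥0∞} {c : ℝ} (h : ∀ c' < c, m c' ≠ 0) :
    (c : EReal) ≤ sInf ((fun s : ℝ => (s : EReal)) '' {s : ℝ | m s = 0}) := by
  refine le_sInf ?_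
  rintro _ ⟨c', hc', rfl⟩
  by_contra hlt
  exact h c' (by simpa using hlt) hc'

variable [BorelSpace X]

/-- The half of the variational principle that bounds free energies by the pressure. -/
lemma le_pressure [CompactSpace X] [IsProbabilityMeasure ν] {f : X → X} (h : Ergodic f ν) {m : ℕ}
    {P : Fin m → Set X} (hP : IsFinPartition P) {ξ : X → ℝ} (hξ : Continuous ξ) :
    ((partRate f ν P + ∫ x, ξ x ∂ν : ℝ) : EReal) ≤ pressure f univ ξ := by
  rw [← EReal.ge_of_forall_gt_iff_ge]
  intro c hc
  have hc : c < partRate f ν P + ∫ x, ξ x ∂ν := by exact_mod_cast hc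
  have hi : Integrable ξ ν :=
    hξ.integrable_of_hasCompactSupport (HasCompactSupport.of_compactSpace _)
  obtain ⟨δ, hδ, H⟩ := coverSum_lower_bound h hP (w := fun x => ξ x - c) (v := fun _ => 1)
    (by fun_prop) continuous_const
    (by rw [integral_sub hi (integrable_const _)]; simp; linarith) (by simp)
  obtain ⟨N, c₀, hc₀, H⟩ := H univ measure_univ
  refine le_trans ?_ (le_iSup₂ (f := fun δ (_ : 0 < δ) => pressureAt f univ ξ δ) δ hδ)
  refine coe_le_sInf fun c' hc' h0 => hc₀ ?_
  rw [← nonpos_iff_eq_zero, ← h0]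
  refine le_trans ?_ (le_iSup _ N)
  refine le_iInf₂ fun E hE => H E hE _ fun p _ => ?_
  rw [birk_sub_const]
  have := mul_le_mul_of_nonneg_left hc'.le (Nat.cast_nonneg (α := ℝ) p.2)
  linarith

/-- A set of full measure has `u`-dimension at least `h_ν(f) / ∫ u`. -/
lemma le_dimu [CompactSpace X] [IsProbabilityMeasure ν] {f : X → X} (h : Ergodic f ν)
    {u : X → ℝ} (hu : Continuous u) (huν : 0 < ∫ x, u x ∂ν) {s : ℝ}
    (hs : kolSinai f ν = s * ∫ x, u x ∂ν) {Z : Set X} (hZ : ν Z = 1) :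
    (s : EReal) ≤ dimu f u Z := by
  rw [← EReal.ge_of_forall_gt_iff_ge]
  intro t ht
  have ht : t < s := by exact_mod_cast ht
  obtain ⟨m, P, hP, hPt⟩ := exists_lt_partRate (f := f) (ν := ν) (a := t * ∫ x, u x ∂ν)
    (by rw [hs]; exact mul_lt_mul_of_pos_right ht huν)
  obtain ⟨δ, hδ, H⟩ := coverSum_lower_bound h hP (w := fun x => -t * u x) (v := u)
    (by fun_prop) hu (by rw [integral_const_mul]; linarith) huν
  obtain ⟨N, c₀, hc₀, H⟩ := H Z hZ
  refine le_trans ?_ (le_iSup₂ (f := fun δ (_ : 0 < δ) => dimuAt f u Z δ) δ hδ)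
  refine coe_le_sInf fun t' ht' h0 => hc₀ ?_
  rw [← nonpos_iff_eq_zero, ← h0]
  refine le_trans ?_ (le_iSup _ N)
  refine le_iInf₂ fun E hE => H E hE _ fun p hp => ?_
  have h1 := birk_lin f u u (-t) 0 p.2 p.1
  simp only [zero_mul, add_zero] at h1
  rw [h1]
  exact mul_le_mul_of_nonneg_right (by linarith) hp

end Consequences

/-! ### The critical point of the pressure function -/

section Critical

/-- The supporting plane of a nonnegative-on-`{b < s}` function at a point of differentiability
where the function is nonpositive must be parallel to the first coordinate. -/
lemma slope_eq_zero {R : ℝ × ℝ → ℝ} {q s A B : ℝ} (hB : 0 < B)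
    (hd : DifferentiableAt ℝ R (q, s))
    (hsub : ∀ a b, R (q, s) + (a - q) * A - (b - s) * B ≤ R (a, b))
    (h0 : R (q, s) ≤ 0) (hpos : ∀ a, ∀ b < s, 0 ≤ R (a, b)) : A = 0 ∧ R (q, s) = 0 := by
  have hR0 : R (q, s) = 0 := by
    refine le_antisymm h0 ?_
    have h1 : Tendsto (fun b => R (q, b)) (𝓝[<] s) (𝓝 (R (q, s))) :=
      (hd.continuousAt.tendsto.comp (Continuous.tendsto (by fun_prop : Continuous fun b : ℝ =>
        ((q, b) : ℝ × ℝ)) s)).mono_left nhdsWithin_le_nhds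
    refine ge_of_tendsto h1 ?_
    filter_upwards [self_mem_nhdsWithin] with b hb using hpos q b hb
  refine ⟨?_, hR0⟩
  by_contra hA
  have hA2 : 0 < A ^ 2 := by positivity
  -- along `(-A, -A² / (2B))` the supporting plane decreases while the second coordinate drops
  -- below `s`
  set ε := A ^ 2 / (2 * B) with hε
  have hε0 : 0 < ε := by positivity
  have hεB : ε * B = A ^ 2 / 2 := by rw [hε]; field_simp
  set g : ℝ → ℝ := fun τ => R (q - τ * A, s - τ * ε) with hg
  have hgd : DifferentiableAt ℝ g 0 := by
    have h1 : DifferentiableAt ℝ (fun τ : ℝ => ((q - τ * A, s - τ * ε) : ℝ × ℝ)) 0 := by fun_prop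
    refine DifferentiableAt.comp (0 : ℝ) (g := R) ?_ h1
    simpa using hd
  have hlow : ∀ τ, τ * (-(A ^ 2) / 2) ≤ g τ := by
    intro τ
    have := hsub (q - τ * A) (s - τ * ε)
    rw [hR0] at this
    calc τ * (-(A ^ 2) / 2) = 0 + (q - τ * A - q) * A - (s - τ * ε - s) * B := by
          linear_combination (-τ) * hεB
      _ ≤ g τ := this
  have hg0 : g 0 = 0 := by simp [hg, hR0]
  have hmin : IsLocalMin (fun τ => g τ - τ * (-(A ^ 2) / 2)) 0 :=
    Eventually.of_forall fun τ => by
      have := hlow τ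
      simp only [hg0]
      linarith
  have hder : HasDerivAt (fun τ => g τ - τ * (-(A ^ 2) / 2)) (deriv g 0 - 1 * (-(A ^ 2) / 2)) 0 :=
    hgd.hasDerivAt.sub ((hasDerivAt_id (0 : ℝ)).mul_const _)
  have h1 := hmin.hasDerivAt_eq_zero hder
  have h2 : deriv g 0 < 0 := by linarith
  have h3 := hgd.hasDerivAt.tendsto_slope.mono_left
    (nhdsWithin_mono (0 : ℝ) (fun τ (hτ : τ ∈ Ioi (0 : ℝ)) => ne_of_gt hτ))
  have h4 : 0 ≤ deriv g 0 := by
    refine ge_of_tendsto h3 ?_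
    filter_upwards [self_mem_nhdsWithin] with τ hτ
    have hτ : 0 < τ := hτ
    rw [slope_def_field, hg0, sub_zero, sub_zero]
    exact div_nonneg (hpos _ _ (by nlinarith)) hτ.le
  linarith

/-- `R(q, s) ≤ 0` when `s = T(q)` and `R(q, ·)` is continuous at `s`. -/
lemma pressure_le_zero_of_Tspec {f : X → X} {φ ψ u : X → ℝ} {α q s : ℝ} {R : ℝ × ℝ → ℝ}
    (hR : ∀ p : ℝ × ℝ, ((R p : ℝ) : EReal) = pressure f univ (potential φ ψ u α p.1 p.2))
    (hc : ContinuousAt R (q, s)) (hT : Tspec f φ ψ u α q = s) : R (q, s) ≤ 0 := by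
  by_contra! hpos
  have h1 : Tendsto (fun b => R (q, b)) (𝓝 s) (𝓝 (R (q, s))) :=
    hc.tendsto.comp (Continuous.tendsto (by fun_prop : Continuous fun b : ℝ =>
        ((q, b) : ℝ × ℝ)) s)
  obtain ⟨η, hη, h2⟩ := Metric.eventually_nhds_iff.1 (h1.eventually (lt_mem_nhds hpos))
  have h3 : Tspec f φ ψ u α q < ((s + η : ℝ) : EReal) := by
    rw [hT]; exact_mod_cast (by linarith : s < s + η)
  obtain ⟨_, ⟨t, ht, rfl⟩, hlt⟩ := sInf_lt_iff.1 h3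
  have hlt : t < s + η := EReal.coe_lt_coe_iff.1 hlt
  have hst : s ≤ t := by
    have : Tspec f φ ψ u α q ≤ (t : EReal) := sInf_le ⟨t, ht, rfl⟩
    rw [hT] at this
    exact_mod_cast this
  have h4 : (R (q, t) : EReal) ≤ 0 := by rw [hR]; exact ht
  have h5 : R (q, t) ≤ 0 := by exact_mod_cast h4
  have h6 : 0 < R (q, t) := h2 (by rw [Real.dist_eq, abs_lt]; constructor <;> linarith)
  linarith

/-- `R(q, t) ≥ 0` for `t < S`. -/
lemma pressure_nonneg_of_lt_Sspec {f : X → X} {φ ψ u : X → ℝ} {α s : ℝ} {R : ℝ × ℝ → ℝ}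
    (hR : ∀ p : ℝ × ℝ, ((R p : ℝ) : EReal) = pressure f univ (potential φ ψ u α p.1 p.2))
    (hs : Sspec f φ ψ u α = s) (q : ℝ) {t : ℝ} (ht : t < s) : 0 ≤ R (q, t) := by
  by_contra! hneg
  have h1 : Tspec f φ ψ u α q ≤ (t : EReal) := by
    refine sInf_le ⟨t, ?_, rfl⟩
    show pressure f univ (potential φ ψ u α q t) ≤ 0
    rw [← hR (q, t)]
    exact_mod_cast hneg.le
  have h2 : (s : EReal) ≤ t := hs ▸ (iInf_le _ q).trans h1
  have : s ≤ t := by exact_mod_cast h2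
  linarith

end Critical

/-! ### The upper bound for the dimension -/

section UpperBound

/-- The image under a recentring map of a family of balls has no larger weight. -/
lemma coverSum_image_le {Ω : Type*} (E : Set (Ω × ℕ)) (F : Ω × ℕ → Ω × ℕ) {w w' : Ω × ℕ → ℝ}
    (h : ∀ p ∈ E, w (F p) ≤ w' p) : coverSum (F '' E) w ≤ coverSum E w' := by
  have hex : ∀ p : F '' E, ∃ p' : E, F p' = p := fun ⟨_, p', hp', h⟩ => ⟨⟨p', hp'⟩, h⟩
  choose g hg using hex
  have hinj : Function.Injective g := fun a b hab => Subtype.ext (by rw [← hg a, ← hg b, hab])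
  calc coverSum (F '' E) w ≤ ∑' p : F '' E, ENNReal.ofReal (Real.exp (w' (g p))) := by
        refine ENNReal.tsum_le_tsum fun p => ENNReal.ofReal_le_ofReal (Real.exp_le_exp.2 ?_)
        rw [← hg p]
        exact h _ (g p).2
    _ ≤ _ := ENNReal.tsum_comp_le_tsum_of_injective hinj
        fun p : E => ENNReal.ofReal (Real.exp (w' p))

/-- When `P(ξ) ≤ 0`, a set on which the weights are eventually beaten by `S_n ξ - n c₀` with
`c₀ > 0` has covers of arbitrarily small weight. -/
lemma exists_cover_of_pressure_le [CompactSpace X] {f : X → X} {ξ : X → ℝ} (hξ : Continuous ξ)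
    (hP : pressure f univ ξ ≤ 0) {Z : Set X} {W : X × ℕ → ℝ} {c₀ : ℝ} (hc₀ : 0 < c₀) {M : ℕ}
    (hW : ∀ y ∈ Z, ∀ n ≥ M, W (y, n) ≤ birk f ξ n y - n * c₀) {δ : ℝ} (hδ : 0 < δ) (N : ℕ)
    {e : ℝ≥0∞} (he : e ≠ 0) :
    ∃ E, IsBowenCover f Z N δ E ∧ coverSum E W ≤ e := by
  obtain ⟨δ₂, hδ₂, hmod⟩ := exists_modulus hξ (half_pos hc₀)
  obtain ⟨ρ, hρ, hρ1, hρ2⟩ : ∃ ρ > 0, ρ ≤ δ / 2 ∧ ρ ≤ δ₂ :=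
    ⟨min (δ / 2) δ₂, by positivity, min_le_left _ _, min_le_right _ _⟩
  have h1 : pressureAt f univ ξ ρ < ((c₀ / 2 : ℝ) : EReal) := by
    refine lt_of_le_of_lt
      ((le_iSup₂ (f := fun δ (_ : 0 < δ) => pressureAt f univ ξ δ) ρ hρ).trans hP) ?_
    exact_mod_cast half_pos hc₀
  obtain ⟨_, ⟨c, hc, rfl⟩, hcl⟩ := sInf_lt_iff.1 h1
  have hcl : c < c₀ / 2 := EReal.coe_lt_coe_iff.1 hcl
  have hc : mP f univ c ξ ρ = 0 := hc
  have h2 : (⨅ (E : Set (X × ℕ)) (_ : IsBowenCover f univ (max N M) ρ E),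
      coverSum E fun p => -(p.2 : ℝ) * c + birk f ξ p.2 p.1) < e := by
    refine lt_of_le_of_lt ?_ (pos_iff_ne_zero.2 he)
    rw [← hc]
    exact le_iSup (fun N : ℕ => ⨅ (E : Set (X × ℕ)) (_ : IsBowenCover f univ N ρ E),
      coverSum E fun p => -(p.2 : ℝ) * c + birk f ξ p.2 p.1) (max N M)
  simp only [iInf_lt_iff] at h2
  obtain ⟨E₀, ⟨hE₀c, hE₀N, hE₀Z⟩, hE₀⟩ := h2
  set E₁ := {p ∈ E₀ | (bowenBall f p.1 p.2 ρ ∩ Z).Nonempty} with hE₁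
  classical
  -- each ball that meets `Z` is recentred at a point of `Z`
  have hex : ∀ p : X × ℕ, ∃ y, p ∈ E₁ → y ∈ bowenBall f p.1 p.2 ρ ∩ Z := fun p => by
    by_cases hp : p ∈ E₁
    · exact ⟨hp.2.some, fun _ => hp.2.some_mem⟩
    · exact ⟨p.1, fun h => (hp h).elim⟩
  choose y hy using hex
  refine ⟨(fun p => (y p, p.2)) '' E₁, ⟨(hE₀c.mono (sep_subset _ _)).image _, ?_, ?_⟩, ?_⟩
  · rintro _ ⟨p, hp, rfl⟩
    exact ⟨(hy p hp).2, (le_max_left _ _).trans (hE₀N p hp.1).2⟩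
  · intro z hz
    obtain ⟨p, hp, hzp⟩ := mem_iUnion₂.1 (hE₀Z (mem_univ z))
    have hp1 : p ∈ E₁ := ⟨hp, z, hzp, hz⟩
    refine mem_iUnion₂.2 ⟨_, mem_image_of_mem _ hp1, fun k hk => ?_⟩
    calc _ ≤ dist (f^[k] p.1) (f^[k] (y p)) + dist (f^[k] p.1) (f^[k] z) :=
          dist_triangle_left _ _ _
      _ < δ := by linarith [(hy p hp1).1 k hk, hzp k hk]
  · refine (coverSum_image_le E₁ _ (w' := fun p => -(p.2 : ℝ) * c + birk f ξ p.2 p.1) ?_).trans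
      ((ENNReal.tsum_mono_subtype (fun p : X × ℕ => ENNReal.ofReal
        (Real.exp (-(p.2 : ℝ) * c + birk f ξ p.2 p.1))) (sep_subset _ _)).trans hE₀.le)
    intro p hp
    have h3 := hW (y p) (hy p hp).2 p.2 ((le_max_right _ _).trans (hE₀N p hp.1).2)
    have h4 := abs_le.1 (birk_dist_le (f := f) hmod (n := p.2) (x := p.1) (y := y p)
      fun k hk => ((hy p hp).1 k hk).trans_le hρ2)
    have h5 := mul_le_mul_of_nonneg_left hcl.le (Nat.cast_nonneg (α := ℝ) p.2)
    linarith

/-- Covers of small weight of the pieces of a countable decomposition combine. -/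
lemma exists_cover_iUnion {f : X → X} {Z : Set X} {ι : Type*} [Countable ι] {Y : ι → Set X}
    (hYZ : ∀ i, Y i ⊆ Z) (hZY : Z ⊆ ⋃ i, Y i) {N : ℕ} {δ : ℝ} {W : X × ℕ → ℝ}
    (h : ∀ i, ∀ e : ℝ≥0∞, e ≠ 0 → ∃ E, IsBowenCover f (Y i) N δ E ∧ coverSum E W ≤ e)
    {e : ℝ≥0∞} (he : e ≠ 0) : ∃ E, IsBowenCover f Z N δ E ∧ coverSum E W ≤ e := by
  obtain ⟨e', he', hsum⟩ := ENNReal.exists_pos_sum_of_countable' he ι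
  choose E hE hEW using fun i => h i (e' i) (he' i).ne'
  refine ⟨⋃ i, E i, ⟨countable_iUnion fun i => (hE i).1, ?_, ?_⟩, ?_⟩
  · intro p hp
    obtain ⟨i, hi⟩ := mem_iUnion.1 hp
    exact ⟨hYZ i ((hE i).2.1 p hi).1, ((hE i).2.1 p hi).2⟩
  · intro z hz
    obtain ⟨i, hi⟩ := mem_iUnion.1 (hZY hz)
    obtain ⟨p, hp, hzp⟩ := mem_iUnion₂.1 ((hE i).2.2 hi)
    exact mem_iUnion₂.2 ⟨p, mem_iUnion.2 ⟨i, hp⟩, hzp⟩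
  · calc _ ≤ ∑' i, coverSum (E i) W := ENNReal.tsum_iUnion_le_tsum
          (fun p => ENNReal.ofReal (Real.exp (W p))) E
      _ ≤ ∑' i, e' i := ENNReal.tsum_le_tsum hEW
      _ ≤ e := hsum.le

/-- On the level set, `S_n u` grows linearly and `S_n (φ - αψ)` is sublinear. -/
lemma growth_of_mem [CompactSpace X] {f : X → X} {φ ψ u : X → ℝ} (hψ : Continuous ψ) {α : ℝ}
    {y : X} (hy : y ∈ Kratio f φ ψ α ∩ Xhat f ψ u) :
    ∃ j : ℕ, ∀ ε > 0, ∃ M : ℕ, ∀ n ≥ M, |birk f φ n y - α * birk f ψ n y| ≤ ε * n ∧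
      1 / ((j : ℝ) + 1) * n ≤ birk f u n y := by
  obtain ⟨hK, hψp, hup⟩ := hy
  obtain ⟨r, hr0, hr⟩ := EReal.lt_iff_exists_real_btwn.1 hup
  have hr0 : 0 < r := by exact_mod_cast hr0
  obtain ⟨j, hj⟩ := exists_nat_one_div_lt hr0
  refine ⟨j, fun ε hε => ?_⟩
  obtain ⟨C, hC⟩ := isCompact_univ.exists_bound_of_continuousOn hψ.continuousOn
  have hC0 : 0 ≤ C := (norm_nonneg _).trans (hC y (mem_univ y))
  have hψle : ∀ n : ℕ, birk f ψ n y ≤ n * C := fun n => by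
    calc birk f ψ n y ≤ ∑ _k ∈ Finset.range n, C :=
          Finset.sum_le_sum fun k _ => (le_abs_self _).trans (hC _ (mem_univ _))
      _ = n * C := by simp
  have h1 : ∀ᶠ n : ℕ in atTop, |birk f φ n y / birk f ψ n y - α| < ε / (C + 1) :=
    (Metric.tendsto_nhds.1 hK _ (by positivity))
  obtain ⟨M, hM⟩ := eventually_atTop.1
    (h1.and ((eventually_lt_of_lt_liminf hψp).and ((eventually_lt_of_lt_liminf hr).and
      (eventually_gt_atTop 0))))
  refine ⟨M, fun n hn => ?_⟩
  obtain ⟨h1, h2, h3, h4⟩ := hM n hn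
  have h2 : 0 < birk f ψ n y := by exact_mod_cast h2
  have h3 : r < birk f u n y / n := EReal.coe_lt_coe_iff.1 h3
  have h4 : (0 : ℝ) < n := by exact_mod_cast h4
  constructor
  · calc |birk f φ n y - α * birk f ψ n y|
        = |birk f φ n y / birk f ψ n y - α| * birk f ψ n y := by
          rw [← abs_of_pos h2, ← abs_mul, abs_of_pos h2, sub_mul, div_mul_cancel₀ _ h2.ne']
      _ ≤ ε / (C + 1) * (n * C) := by
          gcongr
          exact hψle n
      _ ≤ ε / (C + 1) * (n * (C + 1)) := by
          gcongr
          linarith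
      _ = ε * n := by field_simp
  · calc 1 / ((j : ℝ) + 1) * n ≤ r * n := by gcongr
      _ ≤ birk f u n y := ((lt_div_iff₀ h4).1 h3).le

lemma dimu_le [CompactSpace X] {f : X → X} {φ ψ u : X → ℝ} (hφ : Continuous φ)
    (hψ : Continuous ψ) (hu : Continuous u) {α q s : ℝ}
    (hP : pressure f univ (potential φ ψ u α q s) ≤ 0) :
    dimu f u (Kratio f φ ψ α ∩ Xhat f ψ u) ≤ s := by
  rw [← EReal.le_of_forall_lt_iff_le]
  intro t ht
  have ht : s < t := EReal.coe_lt_coe_iff.1 ht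
  refine iSup₂_le fun δ hδ => sInf_le ⟨t, ?_, rfl⟩
  show mU f u _ t δ = 0
  refine ENNReal.iSup_eq_zero.2 fun N => ?_
  by_contra hne
  -- the tolerance on `S_n (φ - αψ)` is tied to the growth rate `1 / (j + 1)` of `S_n u`
  set c : ℕ → ℝ := fun j => (t - s) * (1 / ((j : ℝ) + 1)) / 2 with hc
  have hc0 : ∀ j, 0 < c j := fun j => by
    have : 0 < t - s := by linarith
    positivity
  set Y : ℕ × ℕ → Set X := fun i => {y ∈ Kratio f φ ψ α ∩ Xhat f ψ u | ∀ n ≥ i.2,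
    |birk f φ n y - α * birk f ψ n y| ≤ c i.1 / (|q| + 1) * n ∧
      1 / ((i.1 : ℝ) + 1) * n ≤ birk f u n y} with hY
  have hcov : Kratio f φ ψ α ∩ Xhat f ψ u ⊆ ⋃ i, Y i := fun y hy => by
    obtain ⟨j, hj⟩ := growth_of_mem hψ hy
    obtain ⟨M, hM⟩ := hj (c j / (|q| + 1)) (div_pos (hc0 j) (by positivity))
    exact mem_iUnion.2 ⟨(j, M), hy, hM⟩
  have hsmall : ∀ i, ∀ e : ℝ≥0∞, e ≠ 0 → ∃ E, IsBowenCover f (Y i) N δ E ∧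
      coverSum E (fun p => -t * birk f u p.2 p.1) ≤ e := by
    intro i e he
    refine exists_cover_of_pressure_le (continuous_potential hφ hψ hu α q s) hP (hc0 i.1)
      (M := i.2) (fun y hy n hn => ?_) hδ N he
    obtain ⟨h1, h2⟩ := hy.2 n hn
    rw [birk_potential]
    have h3 : -(q * (birk f φ n y - α * birk f ψ n y)) ≤ n * c i.1 := by
      calc _ ≤ |q| * |birk f φ n y - α * birk f ψ n y| := by
            rw [← abs_mul]; exact neg_le_abs _
        _ ≤ |q| * (c i.1 / (|q| + 1) * n) := by gcongr
        _ ≤ (|q| + 1) * (c i.1 / (|q| + 1) * n) := by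
            have := (hc0 i.1).le
            gcongr
            linarith
        _ = n * c i.1 := by field_simp
    have h4 : 2 * (n * c i.1) ≤ (t - s) * birk f u n y := by
      calc 2 * (n * c i.1) = (t - s) * (1 / ((i.1 : ℝ) + 1) * n) := by simp only [hc]; ring
        _ ≤ _ := mul_le_mul_of_nonneg_left h2 (by linarith)
    simp only
    linarith
  obtain ⟨e, he0, he⟩ := exists_between (pos_iff_ne_zero.2 hne)
  obtain ⟨E, hE, hEW⟩ := exists_cover_iUnion (fun i => sep_subset _ _) hcov hsmall he0.ne'
  exact absurd (he.trans_le ((iInf₂_le E hE).trans hEW)) (lt_irrefl _)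

end UpperBound

/-! ### The level set has full measure -/

section FullMeasure

variable [MeasurableSpace X] [BorelSpace X] {ν : Measure X}

lemma ae_mem_level [CompactSpace X] [IsProbabilityMeasure ν] {f : X → X} (h : Ergodic f ν)
    {φ ψ u : X → ℝ} (hφ : Continuous φ) (hψ : Continuous ψ) (hu : Continuous u) {α : ℝ}
    (hψν : 0 < ∫ x, ψ x ∂ν) (huν : 0 < ∫ x, u x ∂ν)
    (hα : ∫ x, φ x ∂ν = α * ∫ x, ψ x ∂ν) :
    ∀ᵐ x ∂ν, x ∈ Kratio f φ ψ α ∩ Xhat f ψ u := by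
  have hint : ∀ {g : X → ℝ}, Continuous g → Integrable g ν := fun hg =>
    hg.integrable_of_hasCompactSupport (HasCompactSupport.of_compactSpace _)
  filter_upwards [ae_tendsto_birk h hφ.measurable (hint hφ),
    ae_tendsto_birk h hψ.measurable (hint hψ), ae_tendsto_birk h hu.measurable (hint hu)]
    with x h1 h2 h3
  refine ⟨?_, ?_, ?_⟩
  · have h4 := h1.div h2 hψν.ne'
    rw [hα, mul_div_cancel_right₀ _ hψν.ne'] at h4
    refine h4.congr' ?_
    filter_upwards [eventually_gt_atTop 0] with n hn
    have hn : (n : ℝ) ≠ 0 := by exact_mod_cast hn.ne'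
    simp only [Pi.div_apply]
    rw [div_div_div_cancel_right₀ hn]
  · have h4 : Tendsto (fun n : ℕ => birk f ψ n x) atTop atTop := by
      refine (h2.pos_mul_atTop hψν tendsto_natCast_atTop_atTop).congr' ?_
      filter_upwards [eventually_gt_atTop 0] with n hn
      have hn : (n : ℝ) ≠ 0 := by exact_mod_cast hn.ne'
      exact div_mul_cancel₀ _ hn
    rw [(EReal.tendsto_coe_nhds_top_iff.2 h4).liminf_eq]
    exact EReal.zero_lt_top
  · rw [(EReal.tendsto_coe.2 h3).liminf_eq]
    exact_mod_cast huν

end FullMeasure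

/-- Theorem B: existence of a full measure.
Suppose `q₀ = q(α)` realises the infimum defining `S(α)`, the potential
`q(α)(φ - αψ) - S(α)u` has an ergodic equilibrium state `ν_α` with `∫ψ dν_α > 0` and
`∫u dν_α > 0`, and `R_α` is differentiable at `(q(α), S(α))`.  Then `ν_α(K̂_α) = 1` and
`dim_u ν_α = S(α)`; in particular `F̂(α) = S(α)`. -/
theorem full_measure_theorem {X : Type*} [MetricSpace X] [CompactSpace X]
    [MeasurableSpace X] [BorelSpace X]
    (f : X → X) (hf : Continuous f) (hfin : FiniteHtop f)
    (φ ψ u : X → ℝ) (hφ : Continuous φ) (hψ : Continuous ψ) (hu : Continuous u)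
    (hP : PropP f u) (α : ℝ)
    (q₀ s : ℝ)
    (hq₀ : Sspec f φ ψ u α = Tspec f φ ψ u α q₀)
    (hs : Sspec f φ ψ u α = (s : EReal))
    (ν : Measure X) [IsProbabilityMeasure ν] (herg : Ergodic f ν)
    (heq : pressure f univ (potential φ ψ u α q₀ s)
      = ((kolSinai f ν + ∫ x, potential φ ψ u α q₀ s x ∂ν : ℝ) : EReal))
    (hψν : 0 < ∫ x, ψ x ∂ν) (huν : 0 < ∫ x, u x ∂ν)
    (R : ℝ × ℝ → ℝ)
    (hR : ∀ p : ℝ × ℝ, ((R p : ℝ) : EReal) = pressure f univ (potential φ ψ u α p.1 p.2))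
    (hdiff : DifferentiableAt ℝ R (q₀, s)) :
    ν (Kratio f φ ψ α ∩ Xhat f ψ u) = 1 ∧
    dimuMeas f u ν = (s : EReal) ∧
    dimu f u (Kratio f φ ψ α ∩ Xhat f ψ u) = (s : EReal) := by
  have hint : ∀ {g : X → ℝ}, Continuous g → Integrable g ν := fun hg =>
    hg.integrable_of_hasCompactSupport (HasCompactSupport.of_compactSpace _)
  set B := ∫ x, u x ∂ν
  set A := ∫ x, (φ x - α * ψ x) ∂ν with hA
  have hpot : ∀ q t, ∫ x, potential φ ψ u α q t x ∂ν = q * A - t * B := fun q t => by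
    unfold potential
    rw [integral_sub (hint (by fun_prop)) (hint (by fun_prop)), integral_const_mul,
      integral_const_mul]
  have hlow : ∀ q t, kolSinai f ν + (q * A - t * B) ≤ R (q, t) := fun q t => by
    have : kolSinai f ν ≤ R (q, t) - (q * A - t * B) := kolSinai_le fun m P hPart => by
      have h1 := le_pressure herg hPart (continuous_potential hφ hψ hu α q t)
      rw [← hR (q, t), hpot] at h1
      have h2 : partRate f ν P + (q * A - t * B) ≤ R (q, t) := by exact_mod_cast h1
      linarith
    linarith
  have heqR : R (q₀, s) = kolSinai f ν + (q₀ * A - s * B) := by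
    have h1 := heq
    rw [← hR (q₀, s), hpot] at h1
    exact_mod_cast h1
  have hR0 : R (q₀, s) ≤ 0 :=
    pressure_le_zero_of_Tspec hR hdiff.continuousAt (hq₀ ▸ hs)
  obtain ⟨hA0, hRz⟩ := slope_eq_zero (A := A) huν hdiff
    (fun a b => by rw [heqR]; linarith [hlow a b]) hR0
    (fun a b hb => pressure_nonneg_of_lt_Sspec hR hs a hb)
  have hent : kolSinai f ν = s * B := by rw [hA0] at heqR; linarith
  have hα : ∫ x, φ x ∂ν = α * ∫ x, ψ x ∂ν := by
    have h1 : A = ∫ x, φ x ∂ν - α * ∫ x, ψ x ∂ν := by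
      rw [hA, integral_sub (hint hφ) (hint (by fun_prop)), integral_const_mul]
    linarith
  have hfull : ν (Kratio f φ ψ α ∩ Xhat f ψ u) = 1 :=
    (measure_congr (eventuallyEq_univ.2 (ae_mem_level herg hφ hψ hu hψν huν hα))).trans
      measure_univ
  have hdim : dimu f u (Kratio f φ ψ α ∩ Xhat f ψ u) = (s : EReal) := by
    refine le_antisymm (dimu_le hφ hψ hu (q := q₀) ?_) (le_dimu herg hu huν hent hfull)
    rw [← hR (q₀, s)]
    exact_mod_cast hR0
  refine ⟨hfull, le_antisymm (sInf_le ⟨_, hfull, hdim.symm⟩) (le_sInf ?_), hdim⟩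
  rintro _ ⟨Z, hZ, rfl⟩
  exact le_dimu herg hu huν hent hZ

end Multifractal
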